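/- arXiv:2204.04755 — 4 statements merged into one kernel-verified Lean document; each statement's English description precedes it below -/
import Mathlib

section
/- Let q ≥ 2, let Γ be a strongly regular graph with parameters (q³+q²+q+1, q²+q, q−1, q+1), and let v be a regular point of Γ (with s = t = q). Let a, b be vertices distinct from v and not adjacent to v with N(v) ∩ N(a) ≠ N(v) ∩ N(b). Define a graph Γ' on the same vertex set as follows: for u ∈ N(v) and a vertex w ∉ N(v) ∪ {v} with N(v) ∩ N(w) = N(v) ∩ N(a), let u and w be adjacent in Γ' iff u ∈ N(v) ∩ N(b); for u ∈ N(v) and w ∉ N(v) ∪ {v} with N(v) ∩ N(w) = N(v) ∩ N(b), let u and w be adjacent in Γ' iff u ∈ N(v) ∩ N(a); all other pairs of vertices are adjacent in Γ' iff they are adjacent in Γ. Then Γ' is a strongly regular graph with parameters (q³+q²+q+1, q²+q, q−1, q+1). -/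
open scoped Classical

/-- For a graph `G` and a set `X` of vertices, `X^⊥` is the set of vertices `w` such that
for every `x ∈ X`, either `w = x` or `w` is adjacent to `x`. -/
def perp {V : Type*} (G : SimpleGraph V) (X : Set V) : Set V :=
  {w | ∀ x ∈ X, w = x ∨ G.Adj w x}

/-- A vertex `v` of a strongly regular graph with parameters
`((s+1)(st+1), s(t+1), s−1, t+1)` is a regular point if (i) the subgraph induced on `N(v)`
is a disjoint union of cliques, and (ii) for every vertex `x ≠ v` not adjacent to `v`, the
span `{v,x}^{⊥⊥}` has exactly `t + 1` elements and is a coclique. -/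
def IsRegularPoint {V : Type*} (G : SimpleGraph V) (t : ℕ) (v : V) : Prop :=
  Equivalence (fun x y : G.neighborSet v => x = y ∨ G.Adj ↑x ↑y) ∧
  ∀ x : V, x ≠ v → ¬ G.Adj v x →
    (perp G (perp G {v, x})).ncard = t + 1 ∧
    ∀ y ∈ perp G (perp G {v, x}), ∀ z ∈ perp G (perp G {v, x}), ¬ G.Adj y z

/-- The pair `(x, w)` is a switched pair (with respect to `v`, `a`, `b`): `x ∈ N(v)` and
`w` is a vertex of the second subconstituent of `v` lying in the fibre of `a` or of `b`. -/
def SwitchedPair {V : Type*} (G : SimpleGraph V) (v a b : V) (x w : V) : Prop :=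
  x ∈ G.neighborSet v ∧ w ≠ v ∧ ¬ G.Adj v w ∧
    (G.neighborSet v ∩ G.neighborSet w = G.neighborSet v ∩ G.neighborSet a ∨
     G.neighborSet v ∩ G.neighborSet w = G.neighborSet v ∩ G.neighborSet b)

section Helpers
open Finset

variable {V : Type} [Fintype V]

noncomputable def nbN (G : SimpleGraph V) (v : V) : Finset V := univ.filter (fun z => G.Adj v z)
noncomputable def nbO (G : SimpleGraph V) (v : V) : Finset V :=
  univ.filter (fun z => z ≠ v ∧ ¬ G.Adj v z)
noncomputable def trc (G : SimpleGraph V) (v z : V) : Finset V := (nbN G v).filter (fun u => G.Adj u z)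
noncomputable def cmn (G : SimpleGraph V) (x y : V) : ℕ :=
  #(univ.filter (fun z => G.Adj x z ∧ G.Adj y z))

lemma mem_nbN {G : SimpleGraph V} {v z : V} : z ∈ nbN G v ↔ G.Adj v z := by simp [nbN]
lemma mem_nbO {G : SimpleGraph V} {v z : V} : z ∈ nbO G v ↔ z ≠ v ∧ ¬ G.Adj v z := by simp [nbO]
lemma mem_trc {G : SimpleGraph V} {v z u : V} : u ∈ trc G v z ↔ G.Adj v u ∧ G.Adj u z := by
  simp [trc, mem_nbN]

lemma card_cmn (G : SimpleGraph V) (x y : V) : Fintype.card (G.commonNeighbors x y) = cmn G x y := by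
  rw [cmn]
  apply Fintype.card_of_subtype
  intro z
  simp [SimpleGraph.mem_commonNeighbors]

lemma card_deg (G : SimpleGraph V) (x : V) : G.degree x = cmn G x x := by
  rw [cmn, ← SimpleGraph.card_neighborFinset_eq_degree]
  congr 1
  ext z
  simp

lemma srg_iff (G : SimpleGraph V) (n k l m : ℕ) : G.IsSRGWith n k l m ↔
    Fintype.card V = n ∧ (∀ x, cmn G x x = k) ∧ (∀ x y, G.Adj x y → cmn G x y = l) ∧
    (∀ x y, x ≠ y → ¬ G.Adj x y → cmn G x y = m) := by
  constructor
  · intro h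
    refine ⟨h.card, fun x => ?_, fun x y hxy => ?_, fun x y hxy hn => ?_⟩
    · rw [← card_deg]; exact h.regular x
    · rw [← card_cmn]; exact h.of_adj x y hxy
    · rw [← card_cmn]; exact h.of_not_adj hxy hn
  · rintro ⟨h1, h2, h3, h4⟩
    refine ⟨h1, fun x => ?_, fun x y hxy => ?_, fun x y hxy hn => ?_⟩
    · rw [card_deg, h2]
    · rw [card_cmn]; exact h3 x y hxy
    · rw [card_cmn]; exact h4 x y hxy hn

lemma cmn_split (G H : SimpleGraph V) (v x y : V) :
    cmn H x y = (if H.Adj x v ∧ H.Adj y v then 1 else 0)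
      + #((nbN G v).filter (fun z => H.Adj x z ∧ H.Adj y z))
      + #((nbO G v).filter (fun z => H.Adj x z ∧ H.Adj y z)) := by
  have h1 : (if H.Adj x v ∧ H.Adj y v then 1 else 0) =
      #(({v} : Finset V).filter (fun z => H.Adj x z ∧ H.Adj y z)) := by
    rw [Finset.filter_singleton]; split_ifs <;> simp
  rw [h1, cmn, ← card_union_of_disjoint, ← card_union_of_disjoint]
  · congr 1
    ext z
    simp only [mem_filter, mem_univ, true_and, mem_union, mem_singleton, mem_nbN, mem_nbO]
    tauto
  · rw [Finset.disjoint_left]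
    intro z
    simp only [mem_filter, mem_union, mem_singleton, mem_nbN, mem_nbO]
    tauto
  · rw [Finset.disjoint_left]
    intro z
    simp only [mem_filter, mem_singleton, mem_nbN]
    rintro ⟨rfl, _⟩ ⟨h, _⟩
    exact G.loopless.irrefl _ h

lemma sum_swap {α β : Type*} (S : Finset α) (R : Finset β) (P : α → β → Prop) :
    ∑ x ∈ S, #(R.filter (fun y => P x y)) = ∑ y ∈ R, #(S.filter (fun x => P x y)) := by
  simp_rw [Finset.card_filter]
  exact Finset.sum_comm

lemma all_one {α : Type*} (S : Finset α) (f : α → ℕ) (h1 : ∀ x ∈ S, f x ≤ 1)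
    (h2 : #S ≤ ∑ x ∈ S, f x) : ∀ x ∈ S, f x = 1 := by
  have := (Finset.sum_eq_sum_iff_of_le h1).1 (by
    apply le_antisymm (Finset.sum_le_sum h1)
    simpa using h2)
  exact this

/-- Basic data extracted from the hypotheses. -/
structure Ctx (G : SimpleGraph V) (q : ℕ) (v : V) : Prop where
  hq : 2 ≤ q
  cardV : Fintype.card V = q ^ 3 + q ^ 2 + q + 1
  deg : ∀ x, cmn G x x = q ^ 2 + q
  adj : ∀ x y, G.Adj x y → cmn G x y = q - 1
  nadj : ∀ x y, x ≠ y → ¬ G.Adj x y → cmn G x y = q + 1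
  tr : ∀ x y z, G.Adj v x → G.Adj v y → G.Adj v z → G.Adj x y → G.Adj y z → x ≠ z → G.Adj x z
  fib : ∀ z ∈ nbO G v, #((nbO G v).filter (fun y => trc G v y = trc G v z)) = q
  cocl : ∀ z ∈ nbO G v, ∀ y ∈ nbO G v, trc G v y = trc G v z → ¬ G.Adj z y

lemma trc_card0 {G : SimpleGraph V} {q : ℕ} {v : V}
    (nadj : ∀ x y, x ≠ y → ¬ G.Adj x y → cmn G x y = q + 1) {z : V} (hz : z ∈ nbO G v) :
    #(trc G v z) = q + 1 := by
  rw [mem_nbO] at hz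
  rw [← nadj v z hz.1.symm hz.2, cmn]
  congr 1
  ext u
  simp [mem_trc, G.adj_comm u z]

lemma Ctx.mk' {G : SimpleGraph V} {q : ℕ} {v : V} (hq : 2 ≤ q)
    (hG : G.IsSRGWith (q ^ 3 + q ^ 2 + q + 1) (q ^ 2 + q) (q - 1) (q + 1))
    (hreg : IsRegularPoint G q v) : Ctx G q v := by
  obtain ⟨h1, h2, h3, h4⟩ := (srg_iff _ _ _ _ _).1 hG
  obtain ⟨he, hs⟩ := hreg
  have hperp : ∀ z ∈ nbO G v, perp G {v, z} = (trc G v z : Set V) := by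
    intro z hz
    rw [mem_nbO] at hz
    ext u
    simp only [perp, Set.mem_ofPred_eq, Set.mem_insert_iff, Set.mem_singleton_iff, forall_eq_or_imp,
      forall_eq, mem_coe, mem_trc]
    constructor
    · rintro ⟨rfl | h, rfl | h'⟩
      · exact absurd rfl hz.1
      · exact absurd h' hz.2
      · exact absurd h.symm hz.2
      · exact ⟨h.symm, h'⟩
    · rintro ⟨h, h'⟩
      exact ⟨Or.inr h.symm, Or.inr h'⟩
  have hspan : ∀ z ∈ nbO G v, perp G (perp G {v, z}) =
      ((insert v ((nbO G v).filter (fun y => trc G v y = trc G v z)) : Finset V) : Set V) := by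
    intro z hz
    have hz' := mem_nbO.1 hz
    have hco := (hs z hz'.1 hz'.2).2
    have hvm : v ∈ perp G (perp G {v, z}) := by
      rw [hperp z hz]
      intro u hu
      simp only [mem_coe, mem_trc] at hu
      exact Or.inr hu.1
    ext y
    simp only [coe_insert, Set.mem_insert_iff, mem_coe, mem_filter]
    constructor
    · intro hy
      by_cases hyv : y = v
      · exact Or.inl hyv
      right
      have hvy : ¬ G.Adj v y := hco v hvm y hy
      have hyO : y ∈ nbO G v := mem_nbO.2 ⟨hyv, hvy⟩
      refine ⟨hyO, ?_⟩
      symm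
      apply Finset.eq_of_subset_of_card_le
      · intro u hu
        rw [hperp z hz] at hy
        rcases hy u hu with h | h
        · subst h
          exact absurd (mem_trc.1 hu).1 hvy
        · exact mem_trc.2 ⟨(mem_trc.1 hu).1, h.symm⟩
      · rw [trc_card0 h4 hz, trc_card0 h4 hyO]
    · rintro (rfl | ⟨hyO, hT⟩)
      · exact hvm
      · rw [hperp z hz, ← hT]
        intro u hu
        exact Or.inr (mem_trc.1 hu).2.symm
  refine ⟨hq, h1, h2, h3, h4, ?_, ?_, ?_⟩
  · intro x y z hx hy hz hxy hyz hne
    have := he.trans (x := ⟨x, hx⟩) (y := ⟨y, hy⟩) (z := ⟨z, hz⟩) (Or.inr hxy) (Or.inr hyz)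
    rcases this with h | h
    · exact absurd (congrArg Subtype.val h) hne
    · exact h
  · intro z hz
    have hz' := mem_nbO.1 hz
    have := (hs z hz'.1 hz'.2).1
    rw [hspan z hz, Set.ncard_coe_finset, card_insert_of_notMem] at this
    · omega
    · simp [mem_nbO]
  · intro z hz y hy hT
    have hz' := mem_nbO.1 hz
    apply (hs z hz'.1 hz'.2).2
    · rw [hspan z hz]; simp [hz]
    · rw [hspan z hz]; simp [hy, hT]

variable {G : SimpleGraph V} {q : ℕ} {v : V}

namespace Ctx

lemma trc_card (c : Ctx G q v) {z : V} (hz : z ∈ nbO G v) : #(trc G v z) = q + 1 :=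
  trc_card0 c.nadj hz

lemma cardN (c : Ctx G q v) : #(nbN G v) = q ^ 2 + q := by
  rw [← c.deg v, cmn, nbN]; simp

lemma cardO (c : Ctx G q v) : #(nbO G v) = q ^ 3 := by
  have h := c.cardV
  have h2 := c.cardN
  have : (univ : Finset V) = insert v (nbN G v) ∪ nbO G v := by
    ext z; simp only [mem_univ, mem_union, mem_insert, mem_nbN, mem_nbO]; tauto
  rw [← Finset.card_univ, this, card_union_of_disjoint, card_insert_of_notMem] at h
  · omega
  · simp [mem_nbN]
  · rw [Finset.disjoint_left]
    intro z; simp only [mem_insert, mem_nbN, mem_nbO]; tauto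

/-- Neighbours of `u` inside `N(v)`. -/
lemma cardNN (c : Ctx G q v) {u : V} (hu : u ∈ nbN G v) :
    #((nbN G v).filter (fun z => G.Adj u z)) = q - 1 := by
  rw [← c.adj v u (mem_nbN.1 hu), cmn]
  congr 1
  ext z; simp [mem_nbN]

lemma cardNO (c : Ctx G q v) {u : V} (hu : u ∈ nbN G v) :
    #((nbO G v).filter (fun z => G.Adj u z)) = q ^ 2 := by
  have h := cmn_split G G v u u
  have h1 := c.cardNN hu
  have h2 := c.hq
  rw [mem_nbN] at hu
  simp only [and_self, hu.symm, if_true] at h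
  rw [c.deg] at h
  omega

lemma noTri (c : Ctx G q v) {u u' z : V} (hu : u ∈ nbN G v) (hu' : u' ∈ nbN G v)
    (hz : z ∈ nbO G v) (ha : G.Adj u u') (h1 : G.Adj u z) (h2 : G.Adj u' z) : False := by
  have hN := c.cardNN hu
  have h := cmn_split G G v u u'
  rw [c.adj _ _ ha] at h
  have hq := c.hq
  have hz' : 0 < #((nbO G v).filter (fun z => G.Adj u z ∧ G.Adj u' z)) :=
    card_pos.2 ⟨z, by simp [hz, h1, h2]⟩
  have hsub : ((nbN G v).filter (fun z => G.Adj u z)).erase u' ⊆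
      (nbN G v).filter (fun z => G.Adj u z ∧ G.Adj u' z) := by
    intro y
    simp only [mem_erase, mem_filter]
    rintro ⟨h3, h4, h5⟩
    exact ⟨h4, h5, c.tr u' u y (mem_nbN.1 hu') (mem_nbN.1 hu) (mem_nbN.1 h4) ha.symm h5 (Ne.symm h3)⟩
  have hc := card_le_card hsub
  rw [card_erase_of_mem (by simp [hu', ha]), hN] at hc
  rw [mem_nbN] at hu hu'
  simp only [hu.symm, hu'.symm, and_self, if_true] at h
  omega

lemma pairO (c : Ctx G q v) {u u' : V} (hu : u ∈ nbN G v) (hu' : u' ∈ nbN G v)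
    (hne : u ≠ u') (ha : ¬ G.Adj u u') :
    #((nbO G v).filter (fun z => G.Adj u z ∧ G.Adj u' z)) = q := by
  have h := cmn_split G G v u u'
  rw [c.nadj _ _ hne ha] at h
  rw [mem_nbN] at hu hu'
  have : (nbN G v).filter (fun z => G.Adj u z ∧ G.Adj u' z) = ∅ := by
    rw [Finset.filter_eq_empty_iff]
    rintro z hz ⟨h1, h2⟩
    exact ha (c.tr u z u' hu (mem_nbN.1 hz) hu' h1 h2.symm hne)
  rw [this] at h
  simp only [hu.symm, hu'.symm, and_self, if_true, card_empty] at h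
  omega

lemma inter_le (c : Ctx G q v) {z z' : V} (hz : z ∈ nbO G v) (hz' : z' ∈ nbO G v)
    (hne : trc G v z' ≠ trc G v z) : #(trc G v z' ∩ trc G v z) ≤ 1 := by
  rw [Finset.card_le_one]
  intro u hu u' hu'
  by_contra hn
  simp only [mem_inter, mem_trc] at hu hu'
  obtain ⟨⟨a1, a2⟩, _, a3⟩ := hu
  obtain ⟨⟨b1, b2⟩, _, b3⟩ := hu'
  by_cases ha : G.Adj u u'
  · exact c.noTri (mem_nbN.2 a1) (mem_nbN.2 b1) hz ha a3 b3
  have h := c.pairO (mem_nbN.2 a1) (mem_nbN.2 b1) hn ha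
  have hf := c.fib z hz
  have hsub : insert z' ((nbO G v).filter (fun y => trc G v y = trc G v z)) ⊆
      (nbO G v).filter (fun z => G.Adj u z ∧ G.Adj u' z) := by
    intro y
    simp only [mem_insert, mem_filter]
    rintro (rfl | ⟨h1, h2⟩)
    · exact ⟨hz', a2, b2⟩
    · refine ⟨h1, ?_, ?_⟩
      · have : u ∈ trc G v y := by rw [h2]; exact mem_trc.2 ⟨a1, a3⟩
        exact (mem_trc.1 this).2
      · have : u' ∈ trc G v y := by rw [h2]; exact mem_trc.2 ⟨b1, b3⟩
        exact (mem_trc.1 this).2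
  have := card_le_card hsub
  rw [card_insert_of_notMem (by simp [hne]), hf, h] at this
  omega

lemma inter_filter (y z : V) : trc G v y ∩ trc G v z = (trc G v z).filter (fun u => G.Adj u y) := by
  ext u; simp only [mem_inter, mem_filter, mem_trc]; tauto

lemma inter_one (c : Ctx G q v) {z z' : V} (hz : z ∈ nbO G v) (hz' : z' ∈ nbO G v)
    (hne : trc G v z' ≠ trc G v z) : #(trc G v z' ∩ trc G v z) = 1 := by
  have key : ∀ y ∈ (nbO G v).filter (fun y => ¬ trc G v y = trc G v z),
      #(trc G v y ∩ trc G v z) = 1 := by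
    apply all_one
    · intro y hy
      rw [mem_filter] at hy
      exact c.inter_le hz hy.1 hy.2
    · have e1 : ∑ y ∈ nbO G v, #(trc G v y ∩ trc G v z) = (q + 1) * q ^ 2 := by
        simp_rw [inter_filter]
        rw [sum_swap]
        rw [Finset.sum_congr rfl (g := fun _ => q ^ 2)]
        · simp [c.trc_card hz]
        · intro u hu
          exact c.cardNO (mem_nbN.2 (mem_trc.1 hu).1)
      rw [← Finset.sum_filter_add_sum_filter_not _ (fun y => trc G v y = trc G v z)] at e1
      rw [Finset.sum_congr rfl (g := fun _ => q + 1)] at e1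
      · have e2 := Finset.card_filter_add_card_filter_not (s := nbO G v)
          (fun y => trc G v y = trc G v z)
        rw [c.fib z hz, c.cardO] at e2
        simp only [sum_const, c.fib z hz, smul_eq_mul] at e1
        nlinarith
      · intro y hy
        rw [mem_filter] at hy
        rw [hy.2, inter_self, c.trc_card hz]
  exact key z' (by simp [hz', hne])

/-- Each clique of `N(v)` meets each trace exactly once. -/
lemma clique_one (c : Ctx G q v) {u w : V} (hu : u ∈ nbN G v) (hw : w ∈ nbO G v) :
    #((insert u ((nbN G v).filter (fun z => G.Adj u z))).filter (fun x => G.Adj x w)) = 1 := by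
  have hun : u ∉ (nbN G v).filter (fun z => G.Adj u z) := by simp
  refine all_one (nbO G v)
    (fun w => #((insert u ((nbN G v).filter (fun z => G.Adj u z))).filter (fun x => G.Adj x w)))
    ?_ ?_ w hw
  · intro w hw
    rw [Finset.card_le_one]
    intro x hx y hy
    simp only [mem_filter, mem_insert] at hx hy
    by_contra hn
    have hxN : x ∈ nbN G v := by
      rcases hx.1 with rfl | h
      · exact hu
      · exact h.1
    have hyN : y ∈ nbN G v := by
      rcases hy.1 with rfl | h
      · exact hu
      · exact h.1
    refine c.noTri hxN hyN hw ?_ hx.2 hy.2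
    rcases hx.1 with rfl | h <;> rcases hy.1 with rfl | h'
    · exact absurd rfl hn
    · exact h'.2
    · exact h.2.symm
    · exact c.tr x u y (mem_nbN.1 hxN) (mem_nbN.1 hu) (mem_nbN.1 hyN) h.2.symm h'.2 hn
  · rw [sum_swap, Finset.sum_congr rfl (g := fun _ => q ^ 2), c.cardO]
    · have := c.hq
      simp only [sum_const, smul_eq_mul, card_insert_of_notMem hun, c.cardNN hu]
      rw [Nat.sub_add_cancel (by omega)]
      apply le_of_eq; ring
    · intro x hx
      rw [mem_insert, mem_filter] at hx
      rcases hx with rfl | h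
      · exact c.cardNO hu
      · exact c.cardNO h.1

lemma cmnN (c : Ctx G q v) {u w : V} (hu : u ∈ nbN G v) (hw : w ∈ nbO G v) :
    #((nbN G v).filter (fun z => G.Adj u z ∧ G.Adj z w)) + (if G.Adj u w then 1 else 0) = 1 := by
  have h := c.clique_one hu hw
  rw [Finset.filter_insert, Finset.filter_filter] at h
  split_ifs at h ⊢ with h1
  · rwa [card_insert_of_notMem (by simp)] at h
  · exact h

lemma cmnO (c : Ctx G q v) {u w : V} (hu : u ∈ nbN G v) (hw : w ∈ nbO G v) :
    #((nbO G v).filter (fun z => G.Adj w z ∧ G.Adj u z)) + (if G.Adj u w then 1 else 0) = q := by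
  have h := cmn_split G G v w u
  have h1 := c.cmnN hu hw
  have hq := c.hq
  have e : (nbN G v).filter (fun z => G.Adj u z ∧ G.Adj z w) =
      (nbN G v).filter (fun z => G.Adj w z ∧ G.Adj u z) := by
    ext z; simp only [mem_filter, G.adj_comm z w]; tauto
  rw [e] at h1
  rw [mem_nbN] at hu
  rw [mem_nbO] at hw
  rw [if_neg (fun h => hw.2 h.1.symm)] at h
  have hne : w ≠ u := by rintro rfl; exact hw.2 hu
  by_cases ha : G.Adj u w
  · rw [c.adj _ _ ha.symm] at h
    simp only [ha, if_true] at h1 ⊢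
    omega
  · rw [c.nadj _ _ hne (fun h => ha h.symm)] at h
    simp only [ha, if_false] at h1 ⊢
    omega

lemma degOO (c : Ctx G q v) {w : V} (hw : w ∈ nbO G v) :
    #((nbO G v).filter (fun z => G.Adj w z)) + 1 = q ^ 2 := by
  have h := cmn_split G G v w w
  have h1 := c.trc_card hw
  have e : trc G v w = (nbN G v).filter (fun z => G.Adj w z) := by
    ext z; simp [trc, G.adj_comm z w]
  rw [e] at h1
  rw [mem_nbO] at hw
  simp only [and_self] at h
  rw [if_neg (fun h => hw.2 h.symm), c.deg] at h
  omega

lemma fibAdj (c : Ctx G q v) {w y : V} (hw : w ∈ nbO G v) (hy : y ∈ nbO G v)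
    (hne : trc G v w ≠ trc G v y) :
    #(((nbO G v).filter (fun z => G.Adj w z)).filter (fun z => trc G v z = trc G v y)) = 1 := by
  set S := (nbO G v).filter (fun z => G.Adj w z) with hS
  have hSO : ∀ z ∈ S, z ∈ nbO G v := fun z hz => (mem_filter.1 hz).1
  have e1 : ∑ z ∈ S, #(trc G v z ∩ trc G v y) + 1 = (q + 1) * q := by
    simp_rw [inter_filter]
    rw [sum_swap]
    have e2 : ∑ u ∈ trc G v y, (#(S.filter (fun z => G.Adj u z)) + (if G.Adj u w then 1 else 0))
        = ∑ u ∈ trc G v y, q := by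
      apply Finset.sum_congr rfl
      intro u hu
      rw [hS, Finset.filter_filter]
      exact c.cmnO (mem_nbN.2 (mem_trc.1 hu).1) hw
    rw [Finset.sum_add_distrib, ← Finset.card_filter, ← inter_filter, c.inter_one hy hw hne] at e2
    simpa [c.trc_card hy] using e2
  have e3 := Finset.card_filter_add_card_filter_not (s := S) (fun z => trc G v z = trc G v y)
  have e4 := c.degOO hw
  rw [← hS] at e4
  rw [← Finset.sum_filter_add_sum_filter_not _ (fun z => trc G v z = trc G v y),
    Finset.sum_congr (s₁ := S.filter (fun z => trc G v z = trc G v y)) rfl (g := fun _ => q + 1),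
    Finset.sum_congr (s₁ := S.filter (fun z => ¬ trc G v z = trc G v y)) rfl (g := fun _ => 1)] at e1
  · simp only [sum_const, smul_eq_mul, mul_one] at e1
    have hq := c.hq
    generalize #(S.filter (fun z => trc G v z = trc G v y)) = n at *
    have : q * n = q * 1 := by nlinarith
    exact Nat.eq_of_mul_eq_mul_left (by omega) this
  · intro z hz
    rw [mem_filter] at hz
    exact c.inter_one hy (hSO z hz.1) hz.2
  · intro z hz
    rw [mem_filter] at hz
    rw [hz.2, inter_self, c.trc_card hy]

lemma fibNon (c : Ctx G q v) {w y : V} (hw : w ∈ nbO G v)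
    (he : trc G v w = trc G v y) :
    #(((nbO G v).filter (fun z => G.Adj w z)).filter (fun z => trc G v z = trc G v y)) = 0 := by
  rw [Finset.card_eq_zero, Finset.filter_eq_empty_iff]
  intro z hz h
  rw [mem_filter] at hz
  exact c.cocl w hw z hz.1 (h.trans he.symm) hz.2

end Ctx

noncomputable def swp (G : SimpleGraph V) (v a b w : V) : V :=
  if trc G v w = trc G v a then b else if trc G v w = trc G v b then a else w

lemma swp_count (a b : V) (hab : trc G v a ≠ trc G v b) (S : Finset V) (P : Finset V → Prop)
    [DecidablePred P] :
    #(S.filter (fun z => P (trc G v (swp G v a b z))))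
      + ((if P (trc G v a) then 1 else 0) * #(S.filter (fun z => trc G v z = trc G v a))
      + (if P (trc G v b) then 1 else 0) * #(S.filter (fun z => trc G v z = trc G v b))) =
    #(S.filter (fun z => P (trc G v z)))
      + ((if P (trc G v b) then 1 else 0) * #(S.filter (fun z => trc G v z = trc G v a))
      + (if P (trc G v a) then 1 else 0) * #(S.filter (fun z => trc G v z = trc G v b))) := by
  simp only [Finset.card_filter, Finset.mul_sum, ← Finset.sum_add_distrib]
  apply Finset.sum_congr rfl
  intro z _
  unfold swp
  by_cases h1 : trc G v z = trc G v a
  · simp only [h1, if_true, hab, if_false]; ring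
  · by_cases h2 : trc G v z = trc G v b
    · simp only [h2, if_true, hab.symm, if_false]; ring
    · simp only [h1, h2, if_false, mul_zero]

lemma swp_mem {a b w : V} (ha : a ∈ nbO G v) (hb : b ∈ nbO G v) (hw : w ∈ nbO G v) :
    swp G v a b w ∈ nbO G v := by
  unfold swp; split_ifs <;> assumption

lemma swp_eq {a b : V} (w w' : V) (hab : trc G v a ≠ trc G v b) :
    trc G v (swp G v a b w) = trc G v (swp G v a b w') ↔ trc G v w = trc G v w' := by
  unfold swp
  by_cases h1 : trc G v w = trc G v a <;> by_cases h2 : trc G v w' = trc G v a <;>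
  by_cases h3 : trc G v w = trc G v b <;> by_cases h4 : trc G v w' = trc G v b <;>
  simp_all <;> grind


lemma trc_iff (z a : V) : G.neighborSet v ∩ G.neighborSet z = G.neighborSet v ∩ G.neighborSet a ↔
    trc G v z = trc G v a := by
  rw [Set.ext_iff, Finset.ext_iff]
  simp only [Set.mem_inter_iff, SimpleGraph.mem_neighborSet, mem_trc, G.adj_comm z, G.adj_comm a]

/-- Description of the switched graph. -/
structure Sw (G H : SimpleGraph V) (v a b : V) : Prop where
  hv : ∀ z, H.Adj v z ↔ G.Adj v z
  hN : ∀ u ∈ nbN G v, ∀ u' ∈ nbN G v, (H.Adj u u' ↔ G.Adj u u')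
  hO : ∀ u ∈ nbO G v, ∀ u' ∈ nbO G v, (H.Adj u u' ↔ G.Adj u u')
  hNO : ∀ u ∈ nbN G v, ∀ w ∈ nbO G v, (H.Adj u w ↔ u ∈ trc G v (swp G v a b w))

lemma cmn_comm (H : SimpleGraph V) (x y : V) : cmn H x y = cmn H y x := by
  simp only [cmn, and_comm]

variable {H : SimpleGraph V} {a b : V}

lemma filterN_vO (s : Sw G H v a b) {w : V} (hw : w ∈ nbO G v) :
    (nbN G v).filter (fun z => H.Adj w z) = trc G v (swp G v a b w) := by
  ext z
  rw [mem_filter]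
  constructor
  · rintro ⟨h1, h2⟩; exact (s.hNO z h1 w hw).1 h2.symm
  · intro h
    have h1 := mem_nbN.2 (mem_trc.1 h).1
    exact ⟨h1, ((s.hNO z h1 w hw).2 h).symm⟩

lemma cmn_vv (s : Sw G H v a b) : cmn H v v = cmn G v v := by
  simp only [cmn, s.hv]

lemma cmn_vu (s : Sw G H v a b) {u : V} (hu : u ∈ nbN G v) : cmn H v u = cmn G v u := by
  simp only [cmn, s.hv]
  congr 1
  apply Finset.filter_congr
  intro z _
  apply and_congr_right
  intro h
  exact s.hN u hu z (mem_nbN.2 h)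

lemma cmn_vw (c : Ctx G q v) (s : Sw G H v a b) (ha : a ∈ nbO G v) (hb : b ∈ nbO G v)
    {w : V} (hw : w ∈ nbO G v) : cmn H v w = q + 1 := by
  rw [← c.trc_card (swp_mem ha hb hw), ← filterN_vO s hw, cmn, nbN, filter_filter]
  simp only [s.hv]

lemma cmn_uu (c : Ctx G q v) (s : Sw G H v a b) (ha : a ∈ nbO G v) (hb : b ∈ nbO G v)
    (hab : trc G v a ≠ trc G v b)
    {u u' : V} (hu : u ∈ nbN G v) (hu' : u' ∈ nbN G v) : cmn H u u' = cmn G u u' := by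
  rw [cmn_split G H v, cmn_split G G v]
  have e1 : (nbN G v).filter (fun z => H.Adj u z ∧ H.Adj u' z) =
      (nbN G v).filter (fun z => G.Adj u z ∧ G.Adj u' z) := by
    apply Finset.filter_congr
    intro z hz
    rw [s.hN u hu z hz, s.hN u' hu' z hz]
  have e2 : (nbO G v).filter (fun z => H.Adj u z ∧ H.Adj u' z) =
      (nbO G v).filter (fun z => u ∈ trc G v (swp G v a b z) ∧ u' ∈ trc G v (swp G v a b z)) := by
    apply Finset.filter_congr
    intro z hz
    rw [s.hNO u hu z hz, s.hNO u' hu' z hz]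
  have e3 : (nbO G v).filter (fun z => G.Adj u z ∧ G.Adj u' z) =
      (nbO G v).filter (fun z => u ∈ trc G v z ∧ u' ∈ trc G v z) := by
    apply Finset.filter_congr
    intro z hz
    rw [mem_nbN] at hu hu'
    simp only [mem_trc, hu, hu', true_and]
  have h := swp_count a b hab (nbO G v) (fun T => u ∈ T ∧ u' ∈ T)
  rw [c.fib a ha, c.fib b hb] at h
  rw [e1, e2, e3, H.adj_comm u, H.adj_comm u', G.adj_comm u, G.adj_comm u', s.hv, s.hv]
  omega

lemma cmn_ww (c : Ctx G q v) (s : Sw G H v a b) (ha : a ∈ nbO G v) (hb : b ∈ nbO G v)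
    (hab : trc G v a ≠ trc G v b)
    {u u' : V} (hu : u ∈ nbO G v) (hu' : u' ∈ nbO G v) : cmn H u u' = cmn G u u' := by
  rw [cmn_split G H v, cmn_split G G v]
  have e1 : (nbN G v).filter (fun z => H.Adj u z ∧ H.Adj u' z) =
      trc G v (swp G v a b u) ∩ trc G v (swp G v a b u') := by
    rw [filter_and, filterN_vO s hu, filterN_vO s hu']
  have e3 : (nbN G v).filter (fun z => G.Adj u z ∧ G.Adj u' z) =
      trc G v u ∩ trc G v u' := by
    rw [filter_and]
    simp only [trc, G.adj_comm _ u, G.adj_comm _ u']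
  have e2 : (nbO G v).filter (fun z => H.Adj u z ∧ H.Adj u' z) =
      (nbO G v).filter (fun z => G.Adj u z ∧ G.Adj u' z) := by
    apply Finset.filter_congr
    intro z hz
    rw [s.hO u hu z hz, s.hO u' hu' z hz]
  have e4 : #(trc G v (swp G v a b u) ∩ trc G v (swp G v a b u')) = #(trc G v u ∩ trc G v u') := by
    by_cases h : trc G v u = trc G v u'
    · rw [(swp_eq u u' hab).2 h, h, inter_self, inter_self, c.trc_card hu',
        c.trc_card (swp_mem ha hb hu')]
    · rw [c.inter_one hu' hu h, c.inter_one (swp_mem ha hb hu') (swp_mem ha hb hu)]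
      rw [Ne, swp_eq u u' hab]
      exact h
  rw [e1, e2, e3, e4, H.adj_comm u, H.adj_comm u', G.adj_comm u, G.adj_comm u', s.hv, s.hv]

lemma cmn_wu (c : Ctx G q v) (s : Sw G H v a b) (ha : a ∈ nbO G v) (hb : b ∈ nbO G v)
    (hab : trc G v a ≠ trc G v b)
    {u w : V} (hu : u ∈ nbN G v) (hw : w ∈ nbO G v) :
    cmn H w u = if H.Adj u w then q - 1 else q + 1 := by
  have hq := c.hq
  have hu1 := mem_nbN.1 hu
  have hw1 := mem_nbO.1 hw
  rw [cmn_split G H v, H.adj_comm w v, s.hv, if_neg (fun h => hw1.2 h.1)]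
  have e1 : (nbN G v).filter (fun z => H.Adj w z ∧ H.Adj u z) =
      (nbN G v).filter (fun z => G.Adj u z ∧ G.Adj z (swp G v a b w)) := by
    apply Finset.filter_congr
    intro z hz
    rw [H.adj_comm w, s.hNO z hz w hw, s.hN u hu z hz, mem_trc]
    rw [mem_nbN] at hz
    tauto
  have e2 : (nbO G v).filter (fun z => H.Adj w z ∧ H.Adj u z) =
      ((nbO G v).filter (fun z => G.Adj w z)).filter (fun z => u ∈ trc G v (swp G v a b z)) := by
    rw [filter_filter]
    apply Finset.filter_congr
    intro z hz
    rw [s.hO w hw z hz, s.hNO u hu z hz]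
  have e3 : (nbO G v).filter (fun z => G.Adj w z ∧ G.Adj u z) =
      ((nbO G v).filter (fun z => G.Adj w z)).filter (fun z => u ∈ trc G v z) := by
    rw [filter_filter]
    apply Finset.filter_congr
    intro z hz
    simp only [mem_trc, hu1, true_and]
  have h1 := c.cmnN hu (swp_mem ha hb hw)
  have h2 := c.cmnO hu hw
  rw [e3] at h2
  have h3 := swp_count a b hab ((nbO G v).filter (fun z => G.Adj w z)) (fun T => u ∈ T)
  have m : ∀ z, G.Adj u z ↔ u ∈ trc G v z := by
    intro z; simp only [mem_trc, hu1, true_and]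
  rw [m] at h1 h2
  rw [e1, e2, s.hNO u hu w hw]
  have h4 : trc G v (swp G v a b w) =
      if trc G v w = trc G v a then trc G v b else if trc G v w = trc G v b then trc G v a
        else trc G v w := by
    unfold swp; split_ifs <;> rfl
  by_cases wa : trc G v w = trc G v a
  · have wb : trc G v w ≠ trc G v b := by rw [wa]; exact hab
    rw [c.fibNon hw wa, c.fibAdj hw hb wb] at h3
    rw [if_pos wa] at h4
    rw [h4] at h1 ⊢
    rw [wa] at h2
    split_ifs at * <;> omega
  · by_cases wb : trc G v w = trc G v b
    · rw [c.fibNon hw wb, c.fibAdj hw ha wa] at h3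
      rw [if_neg wa, if_pos wb] at h4
      rw [h4] at h1 ⊢
      rw [wb] at h2
      split_ifs at * <;> omega
    · rw [c.fibAdj hw hb wb, c.fibAdj hw ha wa] at h3
      rw [if_neg wa, if_neg wb] at h4
      rw [h4] at h1 ⊢
      split_ifs at * <;> omega

lemma sw_srg (c : Ctx G q v) (s : Sw G H v a b) (ha : a ∈ nbO G v) (hb : b ∈ nbO G v)
    (hab : trc G v a ≠ trc G v b) :
    H.IsSRGWith (q ^ 3 + q ^ 2 + q + 1) (q ^ 2 + q) (q - 1) (q + 1) := by
  have tri : ∀ x, x = v ∨ x ∈ nbN G v ∨ x ∈ nbO G v := by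
    intro x; rw [mem_nbN, mem_nbO]; tauto
  have same : ∀ x y, cmn H x y = cmn G x y → (H.Adj x y ↔ G.Adj x y) →
      (x ≠ y → cmn H x y = if H.Adj x y then q - 1 else q + 1) := by
    intro x y h1 h2 h3
    rw [h1]
    split_ifs with h
    · exact c.adj x y (h2.1 h)
    · exact c.nadj x y h3 (fun h' => h (h2.2 h'))
  have sy : ∀ x y, (cmn H x y = if H.Adj x y then q - 1 else q + 1) →
      (cmn H y x = if H.Adj y x then q - 1 else q + 1) := by
    intro x y h
    rw [cmn_comm, H.adj_comm, h]
  have vw : ∀ w ∈ nbO G v, (cmn H v w = if H.Adj v w then q - 1 else q + 1) := by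
    intro w hw
    rw [if_neg, cmn_vw c s ha hb hw]
    rw [s.hv]
    exact (mem_nbO.1 hw).2
  have main : ∀ x y, x ≠ y → cmn H x y = if H.Adj x y then q - 1 else q + 1 := by
    intro x y hne
    rcases tri x with rfl | hx | hx <;> rcases tri y with rfl | hy | hy
    · exact absurd rfl hne
    · exact same _ _ (cmn_vu s hy) (s.hv y) hne
    · exact vw y hy
    · exact sy _ _ (same _ _ (cmn_vu s hx) (s.hv x) hne.symm)
    · exact same _ _ (cmn_uu c s ha hb hab hx hy) (s.hN x hx y hy) hne
    · rw [cmn_comm]; exact cmn_wu c s ha hb hab hx hy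
    · exact sy _ _ (vw x hx)
    · rw [cmn_wu c s ha hb hab hy hx, H.adj_comm]
    · exact same _ _ (cmn_ww c s ha hb hab hx hy) (s.hO x hx y hy) hne
  rw [srg_iff]
  refine ⟨c.cardV, fun x => ?_, fun x y h => ?_, fun x y h h' => ?_⟩
  · rw [← c.deg x]
    rcases tri x with rfl | hx | hx
    · exact cmn_vv s
    · exact cmn_uu c s ha hb hab hx hx
    · exact cmn_ww c s ha hb hab hx hx
  · rw [main x y h.ne, if_pos h]
  · rw [main x y h, if_neg h']

end Helpers

/-- switching the edges towards `N(v)` of the two fibres (of a regular point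
`v`) containing `a` and `b` produces again a strongly regular graph with parameters
`(q³+q²+q+1, q²+q, q−1, q+1)`. The graph `Γ'` (= `G'`) is described by: for `u ∈ N(v)` and
`w` in the fibre of `a`, `u ~ w` in `Γ'` iff `u ∈ N(v) ∩ N(b)`; for `u ∈ N(v)` and `w` in
the fibre of `b`, `u ~ w` in `Γ'` iff `u ∈ N(v) ∩ N(a)`; all other adjacencies are as in
`Γ`. -/
theorem switched_graph_isSRGWith {V : Type} [Fintype V]
    (q : ℕ) (hq : 2 ≤ q) (G : SimpleGraph V)
    (hG : G.IsSRGWith (q ^ 3 + q ^ 2 + q + 1) (q ^ 2 + q) (q - 1) (q + 1))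
    (v : V) (hreg : IsRegularPoint G q v)
    (a b : V) (hav : a ≠ v) (hbv : b ≠ v) (haa : ¬ G.Adj v a) (hba : ¬ G.Adj v b)
    (hab : G.neighborSet v ∩ G.neighborSet a ≠ G.neighborSet v ∩ G.neighborSet b)
    (G' : SimpleGraph V)
    (hGa : ∀ u ∈ G.neighborSet v, ∀ w : V, w ≠ v → ¬ G.Adj v w →
      G.neighborSet v ∩ G.neighborSet w = G.neighborSet v ∩ G.neighborSet a →
      (G'.Adj u w ↔ u ∈ G.neighborSet v ∩ G.neighborSet b))
    (hGb : ∀ u ∈ G.neighborSet v, ∀ w : V, w ≠ v → ¬ G.Adj v w →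
      G.neighborSet v ∩ G.neighborSet w = G.neighborSet v ∩ G.neighborSet b →
      (G'.Adj u w ↔ u ∈ G.neighborSet v ∩ G.neighborSet a))
    (hGrest : ∀ x y : V, ¬ SwitchedPair G v a b x y → ¬ SwitchedPair G v a b y x →
      (G'.Adj x y ↔ G.Adj x y)) :
    G'.IsSRGWith (q ^ 3 + q ^ 2 + q + 1) (q ^ 2 + q) (q - 1) (q + 1) := by
  have c := Ctx.mk' hq hG hreg
  have ha : a ∈ nbO G v := mem_nbO.2 ⟨hav, haa⟩
  have hb : b ∈ nbO G v := mem_nbO.2 ⟨hbv, hba⟩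
  have hT : trc G v a ≠ trc G v b := fun h => hab ((trc_iff a b).2 h)
  refine sw_srg c ⟨?_, ?_, ?_, ?_⟩ ha hb hT
  · intro z
    apply hGrest
    · rintro ⟨h, _⟩
      exact G.loopless.irrefl _ h
    · rintro ⟨_, h, _⟩
      exact h rfl
  · intro u hu u' hu'
    rw [mem_nbN] at hu hu'
    apply hGrest
    · rintro ⟨_, _, h, _⟩
      exact h hu'
    · rintro ⟨_, _, h, _⟩
      exact h hu
  · intro u hu u' hu'
    rw [mem_nbO] at hu hu'
    apply hGrest
    · rintro ⟨h, _⟩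
      exact hu.2 h
    · rintro ⟨h, _⟩
      exact hu'.2 h
  · intro u hu w hw
    rw [mem_nbN] at hu
    rw [mem_nbO] at hw
    unfold swp
    split_ifs with h1 h2
    · rw [hGa u hu w hw.1 hw.2 ((trc_iff w a).2 h1), mem_trc, G.adj_comm u b]
      rfl
    · rw [hGb u hu w hw.1 hw.2 ((trc_iff w b).2 h2), mem_trc, G.adj_comm u a]
      rfl
    · rw [hGrest u w, mem_trc]
      · simp [hu]
      · rintro ⟨_, _, _, h | h⟩
        · exact h1 ((trc_iff w a).1 h)
        · exact h2 ((trc_iff w b).1 h)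
      · rintro ⟨h, _⟩
        exact hw.2 h
end

section
/- Let F be a finite field with |F| = q ≥ 3. There exist graphs G₁, …, G_q, each on q³+q²+q+1 vertices, which are pairwise non-isomorphic, each strongly regular with parameters (q³+q²+q+1, q²+q, q−1, q+1) (hence each cospectral with the symplectic graph Sp(4,q)), and none of which is isomorphic to the collinearity graph of any generalized quadrangle of order (q,q) (in particular, none is isomorphic to Sp(4,q)). -/
open scoped Classical LinearAlgebra.Projectivization

/-- A generalized quadrangle of order `(s, t)`. -/
structure GenQuadrangle (s t : ℕ) where
  P : Type
  L : Type
  fintypeP : Fintype P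
  fintypeL : Fintype L
  Incid : P → L → Prop
  point_lines : ∀ p : P, {l : L | Incid p l}.ncard = t + 1
  line_points : ∀ l : L, {p : P | Incid p l}.ncard = s + 1
  two_points : ∀ p q : P, p ≠ q → ∀ l m : L,
    Incid p l → Incid q l → Incid p m → Incid q m → l = m
  gq_axiom : ∀ (x : P) (l : L), ¬ Incid x l →
    ∃! ym : P × L, Incid x ym.2 ∧ Incid ym.1 ym.2 ∧ Incid ym.1 l

/-- The collinearity graph of a generalized quadrangle. -/
def GenQuadrangle.collinearityGraph {s t : ℕ} (Q : GenQuadrangle s t) : SimpleGraph Q.P :=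
  SimpleGraph.fromRel (fun p q => ∃ l : Q.L, Q.Incid p l ∧ Q.Incid q l)

/-- The symplectic form on `F^4` given by `u₀w₁ − u₁w₀ + u₂w₃ − u₃w₂`. -/
def sympForm {F : Type} [Field F] (u w : Fin 4 → F) : F :=
  u 0 * w 1 - u 1 * w 0 + u 2 * w 3 - u 3 * w 2

/-- The symplectic graph `Sp(4,q)`. -/
def spGraph (F : Type) [Field F] : SimpleGraph (ℙ F (Fin 4 → F)) :=
  SimpleGraph.fromRel (fun x y => sympForm x.rep y.rep = 0)

set_option linter.unusedSectionVars false

namespace WqM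

/-- the linear functionals indexed by directions -/
def ell {F : Type} [Field F] (i : Option F) (x : F × F) : F :=
  match i with
  | none => x.1
  | some m => x.2 + m * x.1

/-- twisting data -/
structure Tw (F : Type) where
  s : Option F → Option F → Equiv.Perm F
  refl : ∀ i, s i i = 1
  symm : ∀ i j, s j i = (s i j).symm

abbrev VV (F : Type) := Option F × Option (F × F)

variable {F : Type} [Field F]

/-- closed adjacency -/
def RR (T : Tw F) : VV F → VV F → Prop
  | (_, none), (_, none) => True
  | (i, none), (j, some _) => i = j
  | (i, some _), (j, none) => i = j
  | (i, some x), (j, some y) => ell i y = T.s i j (ell j x)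

lemma RR_symm (T : Tw F) {u v : VV F} (h : RR T u v) : RR T v u := by
  rcases u with ⟨i, _ | x⟩ <;> rcases v with ⟨j, _ | y⟩ <;> simp only [RR] at h ⊢
  · exact h.symm
  · exact h.symm
  · rw [T.symm i j, h]; simp

lemma RR_refl (T : Tw F) (u : VV F) : RR T u u := by
  rcases u with ⟨i, _ | x⟩ <;> simp [RR, T.refl]

def Gr (T : Tw F) : SimpleGraph (VV F) where
  Adj u v := u ≠ v ∧ RR T u v
  symm := ⟨fun _ _ h => ⟨h.1.symm, RR_symm T h.2⟩⟩
  loopless := ⟨fun _ h => h.1 rfl⟩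

lemma ell_bij {i j : Option F} (h : i ≠ j) (a b : F) :
    ∃! x : F × F, ell i x = a ∧ ell j x = b := by
  rcases i with _ | m <;> rcases j with _ | n
  · exact absurd rfl h
  · refine ⟨(a, b - n * a), by simp [ell], ?_⟩
    rintro ⟨x, y⟩ ⟨h1, h2⟩
    simp only [ell] at h1 h2
    subst h1; subst h2; simp
  · refine ⟨(b, a - m * b), by simp [ell], ?_⟩
    rintro ⟨x, y⟩ ⟨h1, h2⟩
    simp only [ell] at h1 h2
    subst h1; subst h2; simp
  · have hmn : m - n ≠ 0 := sub_ne_zero.2 (fun e => h (by rw [e]))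
    refine ⟨((a - b) / (m - n), a - m * ((a - b) / (m - n))), ?_, ?_⟩
    · simp only [ell]; constructor
      · ring
      · field_simp; ring
    · rintro ⟨x, y⟩ ⟨h1, h2⟩
      simp only [ell] at h1 h2
      have : x = (a - b) / (m - n) := by
        rw [eq_div_iff hmn, ← h1, ← h2]; ring
      rw [← this]; ext
      · rfl
      · simp [← h1]

lemma ell_inj {i j : Option F} (h : i ≠ j) {x y : F × F} (h1 : ell i x = ell i y)
    (h2 : ell j x = ell j y) : x = y :=
  (ell_bij h (ell i y) (ell j y)).unique ⟨h1, h2⟩ ⟨rfl, rfl⟩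

lemma exists_ell_eq {x y : F × F} (h : x ≠ y) : ∃! i : Option F, ell i x = ell i y := by
  have key : ∃ i : Option F, ell i x = ell i y := by
    by_cases h1 : x.1 = y.1
    · exact ⟨none, h1⟩
    · refine ⟨some (-(x.2 - y.2) / (x.1 - y.1)), ?_⟩
      have : x.1 - y.1 ≠ 0 := sub_ne_zero.2 h1
      simp only [ell]; field_simp; ring
  obtain ⟨i, hi⟩ := key
  refine ⟨i, hi, fun j hj => ?_⟩
  by_contra hne
  exact h (ell_inj hne hj hi)

variable [Fintype F]

/-- indicator -/
noncomputable def ind (p : Prop) : ℕ := if p then 1 else 0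

lemma ind_true : ind True = 1 := by simp [ind]
lemma ind_of {p : Prop} (h : p) : ind p = 1 := by simp [ind, h]
lemma ind_not {p : Prop} (h : ¬ p) : ind p = 0 := by simp [ind, h]

lemma sum_ind {α : Type} [Fintype α] (a : α) : ∑ x : α, ind (a = x) = 1 := by
  simp [ind]

lemma sum_ind' {α : Type} [Fintype α] (a : α) : ∑ x : α, ind (x = a) = 1 := by
  simp [ind]

lemma card_ind {α : Type} [Fintype α] (p : α → Prop) [DecidablePred p] :
    (Finset.univ.filter p).card = ∑ x, ind (p x) := by
  rw [Finset.card_filter]; exact Finset.sum_congr rfl (fun x _ => by unfold ind; congr)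

lemma card_VV_ind (p : VV F → Prop) [DecidablePred p] :
    (Finset.univ.filter p).card
      = ∑ i : Option F, ind (p (i, none)) + ∑ i : Option F, ∑ x : F × F, ind (p (i, some x)) := by
  rw [card_ind, Fintype.sum_prod_type, ← Finset.sum_add_distrib]
  exact Finset.sum_congr rfl (fun i _ => Fintype.sum_option _)

lemma card_ell (i : Option F) (a : F) :
    (∑ x : F × F, ind (ell i x = a)) = Fintype.card F := by
  rcases i with _ | m
  · rw [Fintype.sum_prod_type, Finset.sum_comm]
    simp only [ell, sum_ind']
    simp
  · rw [Fintype.sum_prod_type]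
    have : ∀ x y : F, (ell (some m) (x, y) = a) = (y = a - m * x) := by
      intro x y; simp only [ell, eq_iff_iff]; constructor
      · rintro rfl; ring
      · rintro rfl; ring
    simp only [this, sum_ind']
    simp

lemma card_ell_two {i j : Option F} (h : i ≠ j) (a b : F) :
    (∑ x : F × F, ind (ell i x = a ∧ ell j x = b)) = 1 := by
  obtain ⟨x, hx, hu⟩ := ell_bij h a b
  have : ∀ y : F × F, (ell i y = a ∧ ell j y = b) = (y = x) :=
    fun y => propext ⟨fun hy => hu y hy, fun hy => hy ▸ hx⟩
  simp only [this, sum_ind']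

lemma closed_deg (T : Tw F) (u : VV F) :
    (Finset.univ.filter (fun w => RR T u w)).card
      = Fintype.card F ^ 2 + Fintype.card F + 1 := by
  rw [card_VV_ind]
  rcases u with ⟨a, _ | x⟩
  · simp only [RR]
    rw [Finset.sum_comm]
    simp only [sum_ind, ind_true]
    simp; ring
  · simp only [RR, card_ell, sum_ind]
    simp; ring

lemma closed_common (T : Tw F) (u v : VV F) (huv : u ≠ v) :
    (Finset.univ.filter (fun w => RR T u w ∧ RR T v w)).card = Fintype.card F + 1 := by
  rw [card_VV_ind]
  have mixed : ∀ (a b : Option F) (y : F × F),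
    ∑ i : Option F, ind (RR T (a, none) (i, none) ∧ RR T (b, some y) (i, none))
     + ∑ i : Option F, ∑ x : F × F, ind (RR T (a, none) (i, some x) ∧ RR T (b, some y) (i, some x))
     = Fintype.card F + 1 := by
    intro a b y
    simp only [RR, true_and, sum_ind]
    have : ∀ i : Option F, (∑ z : F × F, ind (a = i ∧ ell b z = T.s b i (ell i y)))
        = if a = i then Fintype.card F else 0 := by
      intro i
      by_cases h : a = i
      · simp only [h, true_and, if_true, card_ell]
      · simp [h, ind]
    rw [Finset.sum_congr rfl (fun i _ => this i)]
    simp; ring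
  rcases u with ⟨a, _ | x⟩ <;> rcases v with ⟨b, _ | y⟩
  · have hab : a ≠ b := fun h => huv (by rw [h])
    simp only [RR]
    have : ∀ i : Option F, (∑ z : F × F, ind (a = i ∧ b = i)) = 0 := by
      intro i
      have : ¬ (a = i ∧ b = i) := fun h => hab (h.1.trans h.2.symm)
      simp [ind_not this]
    rw [Finset.sum_congr rfl (fun i _ => this i)]
    simp [ind_true]
  · exact mixed a b y
  · simp only [and_comm (a := RR T (a, some x) _)]
    exact mixed b a x
  · simp only [RR]
    by_cases hab : a = b
    · subst hab
      have hxy : x ≠ y := fun h => huv (by rw [h])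
      obtain ⟨i0, hi0, hu⟩ := exists_ell_eq hxy
      have : ∀ i : Option F, (∑ z : F × F,
          ind (ell a z = T.s a i (ell i x) ∧ ell a z = T.s a i (ell i y)))
          = if i = i0 then Fintype.card F else 0 := by
        intro i
        by_cases h : i = i0
        · subst h
          simp only [hi0, and_self, if_true, card_ell]
        · have h2 : ∀ z, ¬ (ell a z = T.s a i (ell i x) ∧ ell a z = T.s a i (ell i y)) := by
            rintro z ⟨h3, h4⟩
            exact h (hu i ((T.s a i).injective (h3.symm.trans h4)))
          simp [ind_not (h2 _), h]
      rw [Finset.sum_congr rfl (fun i _ => this i)]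
      simp only [and_self, sum_ind]
      simp; ring
    · simp only [card_ell_two hab]
      have : ∀ i : Option F, ¬ (a = i ∧ b = i) := fun i h => hab (h.1.trans h.2.symm)
      simp [ind_not (this _)]

lemma card_VV : Fintype.card (VV F) = Fintype.card F ^ 3 + Fintype.card F ^ 2 + Fintype.card F + 1 := by
  simp [VV]; ring

lemma srg_transport (T : Tw F) {N : ℕ} (e : Fin N ≃ VV F) (q : ℕ) (hq : Fintype.card F = q)
    (hq3 : 3 ≤ q) (hN : N = q ^ 3 + q ^ 2 + q + 1) :
    ((Gr T).comap e).IsSRGWith N (q ^ 2 + q) (q - 1) (q + 1) := by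
  have hcn : ∀ v w : Fin N, Fintype.card (((Gr T).comap e).commonNeighbors v w)
      = (Finset.univ.filter (fun z => (RR T (e v) z ∧ RR T (e w) z) ∧ z ≠ e v ∧ z ≠ e w)).card := by
    intro v w
    rw [← Fintype.card_coe]
    refine Fintype.card_congr (e.subtypeEquiv ?_)
    intro z
    simp only [SimpleGraph.mem_commonNeighbors, SimpleGraph.comap_adj, Gr, Finset.mem_filter, Finset.mem_univ, true_and]
    tauto
  refine ⟨by simp, ?_, ?_, ?_⟩
  · intro v
    have h1 : ((Gr T).comap e).degree v
      = ((Finset.univ.filter (fun z => RR T (e v) z)).erase (e v)).card := by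
      rw [← SimpleGraph.card_neighborSet_eq_degree, ← Fintype.card_coe]
      refine Fintype.card_congr (e.subtypeEquiv ?_)
      intro z
      simp only [SimpleGraph.mem_neighborSet, SimpleGraph.comap_adj, Gr, Finset.mem_erase, Finset.mem_filter, Finset.mem_univ, true_and]
      tauto
    rw [h1, Finset.card_erase_of_mem (by simp [RR_refl]), closed_deg, hq]; simp
  · intro v w hvw
    obtain ⟨hne, hR⟩ : e v ≠ e w ∧ RR T (e v) (e w) := hvw
    rw [hcn]
    have : (Finset.univ.filter (fun z => (RR T (e v) z ∧ RR T (e w) z) ∧ z ≠ e v ∧ z ≠ e w))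
      = ((Finset.univ.filter (fun z => RR T (e v) z ∧ RR T (e w) z)).erase (e v)).erase (e w) := by
      ext z; simp only [Finset.mem_erase, Finset.mem_filter, Finset.mem_univ, true_and]; tauto
    rw [this, Finset.card_erase_of_mem, Finset.card_erase_of_mem, closed_common T _ _ hne, hq]
    · omega
    · simp [RR_refl, RR_symm T hR]
    · simp [RR_refl, hR, hne.symm]
  · intro v w hvw hadj
    have hne : e v ≠ e w := fun h => hvw (e.injective h)
    have hR : ¬ RR T (e v) (e w) := fun h => hadj ⟨hne, h⟩
    have hR' : ¬ RR T (e w) (e v) := fun h => hR (RR_symm T h)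
    rw [hcn, ← hq, ← closed_common T _ _ hne]
    congr 1
    ext z
    simp only [Finset.mem_filter, Finset.mem_univ, true_and]
    constructor
    · exact fun h => h.1
    · refine fun h => ⟨h, ?_, ?_⟩
      · rintro rfl; exact hR' h.2
      · rintro rfl; exact hR h.1

end WqM

set_option linter.unusedSectionVars false
namespace WqM

/-- the neighbourhood of `v` is a disjoint union of cliques -/
def Full {V : Type} (G : SimpleGraph V) (v : V) : Prop :=
  ∀ a b c, G.Adj v a → G.Adj v b → G.Adj v c → G.Adj a b → G.Adj b c → a ≠ c → G.Adj a c

lemma Full_iso' {V W : Type} {G : SimpleGraph V} {H : SimpleGraph W} (φ : G ≃g H) {v : V}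
    (h : Full H (φ v)) : Full G v := by
  intro a b c h1 h2 h3 h4 h5 h6
  rw [← φ.map_adj_iff] at h1 h2 h3 h4 h5 ⊢
  exact h _ _ _ h1 h2 h3 h4 h5 (fun e => h6 (φ.injective e))

lemma Full_iso {V W : Type} {G : SimpleGraph V} {H : SimpleGraph W} (φ : G ≃g H) (v : V) :
    Full H (φ v) ↔ Full G v :=
  ⟨Full_iso' φ, fun h => Full_iso' φ.symm (by simpa using h)⟩

lemma gq_full {s t : ℕ} (Q : GenQuadrangle s t) (v : Q.P) : Full Q.collinearityGraph v := by
  have col : ∀ x y, Q.collinearityGraph.Adj x y ↔ x ≠ y ∧ ∃ l, Q.Incid x l ∧ Q.Incid y l := by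
    intro x y
    simp only [GenQuadrangle.collinearityGraph, SimpleGraph.fromRel_adj]
    constructor
    · rintro ⟨h, ⟨l, h1, h2⟩ | ⟨l, h1, h2⟩⟩
      · exact ⟨h, l, h1, h2⟩
      · exact ⟨h, l, h2, h1⟩
    · rintro ⟨h, l, h1, h2⟩
      exact ⟨h, Or.inl ⟨l, h1, h2⟩⟩
  have tri : ∀ x y z l, Q.collinearityGraph.Adj x y → Q.collinearityGraph.Adj x z →
      Q.collinearityGraph.Adj y z → Q.Incid x l → Q.Incid y l → Q.Incid z l := by
    intro x y z l h1 h2 h3 hx hy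
    by_contra hz
    obtain ⟨hxy, -⟩ := (col _ _).1 h1
    obtain ⟨hxz, m, hm1, hm2⟩ := (col _ _).1 h2
    obtain ⟨hyz, n, hn1, hn2⟩ := (col _ _).1 h3
    have := (GenQuadrangle.gq_axiom Q z l hz).unique (y₁ := (x, m)) (y₂ := (y, n))
      ⟨hm2, hm1, hx⟩ ⟨hn2, hn1, hy⟩
    exact hxy (congrArg Prod.fst this)
  intro a b c h1 h2 h3 h4 h5 h6
  obtain ⟨_, l, hv, ha⟩ := (col _ _).1 h1
  have hb := tri v a b l h1 h2 h4 hv ha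
  have hc := tri v b c l h2 h3 h5 hv hb
  exact (col _ _).2 ⟨h6, l, ha, hc⟩

lemma symp_key {F : Type} [Field F] (v a b c : Fin 4 → F) (h1 : sympForm v a = 0)
    (h2 : sympForm v b = 0) (h3 : sympForm v c = 0) (h4 : sympForm a b = 0)
    (h5 : sympForm b c = 0) (h6 : sympForm a c ≠ 0) (i j : Fin 4) : v i * b j = v j * b i := by
  have key : sympForm a c * (v i * b j - v j * b i) = 0 := by
    unfold sympForm at *
    fin_cases i <;> fin_cases j <;> simp <;> grind
  rcases mul_eq_zero.1 key with h | h
  · exact absurd h h6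
  · exact sub_eq_zero.1 h

lemma symp_full {F : Type} [Field F] (v : ℙ F (Fin 4 → F)) : Full (spGraph F) v := by
  have anti : ∀ u w : Fin 4 → F, sympForm u w = - sympForm w u := by
    intro u w; unfold sympForm; ring
  have col : ∀ x y, (spGraph F).Adj x y ↔ x ≠ y ∧ sympForm x.rep y.rep = 0 := by
    intro x y
    simp only [spGraph, SimpleGraph.fromRel_adj]
    rw [anti y.rep x.rep]; simp
  intro a b c h1 h2 h3 h4 h5 h6
  rw [col] at *
  refine ⟨h6, ?_⟩
  by_contra h
  have key := symp_key v.rep a.rep b.rep c.rep h1.2 h2.2 h3.2 h4.2 h5.2 h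
  apply h2.1
  obtain ⟨i, hi⟩ : ∃ i, b.rep i ≠ 0 := by
    by_contra hh; push Not at hh
    exact b.rep_nonzero (funext hh)
  rw [← v.mk_rep, ← b.mk_rep, Projectivization.mk_eq_mk_iff']
  refine ⟨v.rep i / b.rep i, ?_⟩
  funext j
  simp only [Pi.smul_apply, smul_eq_mul]
  field_simp
  rw [key i j, mul_comm]

end WqM

set_option linter.unusedSectionVars false
set_option linter.unusedSimpArgs false
namespace WqM
variable {F : Type} [Field F]

lemma full_of_label (T : Tw F) (v : VV F) (f : VV F → Option F)
    (h : ∀ a b, RR T v a → RR T v b → a ≠ v → b ≠ v → a ≠ b → (RR T a b ↔ f a = f b)) :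
    Full (Gr T) v := by
  rintro a b c ⟨h1, h1'⟩ ⟨h2, h2'⟩ ⟨h3, h3'⟩ ⟨h4, h4'⟩ ⟨h5, h5'⟩ h6
  refine ⟨h6, ?_⟩
  rw [h a c h1' h3' h1.symm h3.symm h6]
  rw [h a b h1' h2' h1.symm h2.symm h4] at h4'
  rw [h b c h2' h3' h2.symm h3.symm h5] at h5'
  exact h4'.trans h5'

lemma full_p (T : Tw F) (i : Option F) : Full (Gr T) (i, none) := by
  refine full_of_label T _ (fun w => match w with
    | (_, none) => none
    | (j, some z) => some (ell j z)) ?_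
  rintro ⟨j, _ | z⟩ ⟨k, _ | w⟩ h1 h2 h3 h4 h5 <;> simp only [RR] at h1 h2 ⊢
  · simp only [reduceCtorEq, iff_false]
    rintro rfl; subst h2; exact h3 rfl
  · simp only [reduceCtorEq, iff_false]
    rintro rfl; subst h1; exact h4 rfl
  · subst h1; subst h2
    simp [T.refl, eq_comm]

noncomputable def twf (c : F) (τ τ' : Equiv.Perm F) (i j : Option F) : Equiv.Perm F :=
  if i = some 0 ∧ j = none then τ else
  if i = none ∧ j = some 0 then τ.symm else
  if i = some 1 ∧ j = some c then τ' else
  if i = some c ∧ j = some 1 then τ'.symm else 1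

noncomputable def tw (c : F) (hc : c ≠ 1) (τ τ' : Equiv.Perm F) : Tw F where
  s := twf c τ τ'
  refl := by
    intro i
    unfold twf
    rcases i with _ | i
    · simp
    · have : ¬ (i = 1 ∧ i = c) := by rintro ⟨rfl, h⟩; exact hc h.symm
      have : ¬ (i = c ∧ i = 1) := by rintro ⟨rfl, h⟩; exact hc h
      simp [*]
  symm := by
    intro i j
    unfold twf
    rcases i with _ | i <;> rcases j with _ | j
    · simp; rfl
    · by_cases h : j = 0 <;> simp [h]; rfl
    · by_cases h : i = 0 <;> simp [h]; rfl
    · by_cases h : i = 1 ∧ j = c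
      · obtain ⟨rfl, rfl⟩ := h
        simp [hc]
      · by_cases h2 : i = c ∧ j = 1
        · obtain ⟨rfl, rfl⟩ := h2
          simp [hc]
        · have h3 : ¬ (j = c ∧ i = 1) := fun e => h ⟨e.2, e.1⟩
          have h4 : ¬ (j = 1 ∧ i = c) := fun e => h2 ⟨e.2, e.1⟩
          simp [h, h2, h3, h4]; rfl

section vals
variable (c : F) (hc : c ≠ 1) (τ τ' : Equiv.Perm F)

lemma tw_0inf : (tw c hc τ τ').s (some 0) none = τ := by simp [tw, twf]
lemma tw_inf0 : (tw c hc τ τ').s none (some 0) = τ.symm := by simp [tw, twf]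
lemma tw_infinf : (tw c hc τ τ').s none none = 1 := by simp [tw, twf]
lemma tw_minf {m : F} (h : m ≠ 0) : (tw c hc τ τ').s (some m) none = 1 := by simp [tw, twf, h]
lemma tw_infm {m : F} (h : m ≠ 0) : (tw c hc τ τ').s none (some m) = 1 := by simp [tw, twf, h]
lemma tw_1c : (tw c hc τ τ').s (some 1) (some c) = τ' := by simp [tw, twf]
lemma tw_c1 : (tw c hc τ τ').s (some c) (some 1) = τ'.symm := by
  have := (tw c hc τ τ').symm (some 1) (some c)
  rw [this, tw_1c]
lemma tw_mn {m n : F} (h : ¬ (m = 1 ∧ n = c)) (h2 : ¬ (m = c ∧ n = 1)) :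
    (tw c hc τ τ').s (some m) (some n) = 1 := by simp [tw, twf, h, h2]
lemma tw_mn1 {m n : F} : (tw c hc τ 1).s (some m) (some n) = 1 := by
  simp only [tw, twf]; simp; intros; rfl
end vals

section one
variable (c : F) (hc : c ≠ 1) (τ : Equiv.Perm F)

lemma full_zero (x : F × F) (hx : τ x.1 = x.1) :
    Full (Gr (tw c hc τ 1)) (some 0, some x) := by
  have hx' : τ.symm x.1 = x.1 := by rw [Equiv.symm_apply_eq, hx]
  have hinj : ∀ z, τ z = x.1 → z = x.1 := fun z hz => τ.injective (hz.trans hx.symm)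
  refine full_of_label _ _ (fun w => match w with
    | (_, none) => none
    | (none, some z) => some z.1
    | (some k, some z) => if k = 0 then none else some ((z.1 - x.1) / k)) ?_
  rintro ⟨_ | j, _ | ⟨z1, z2⟩⟩ ⟨_ | k, _ | ⟨w1, w2⟩⟩ h1 h2 h3 h4 h5 <;>
    simp only [RR, tw_0inf, tw_infinf, tw_mn1, ell, Equiv.Perm.one_apply, reduceCtorEq,
      Option.some.injEq, not_true, zero_mul, add_zero] at h1 h2 ⊢
  case none.some.none.some => grind
  case some.none.some.some => grind
  case some.some.some.none => grind
  case none.some.some.some =>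
    by_cases hk : k = 0
    · subst hk; simp only [tw_inf0, zero_mul, add_zero] at *; grind
    · simp only [tw_infm _ _ _ _ hk, Equiv.Perm.one_apply]; grind
  case some.some.none.some =>
    by_cases hk : j = 0
    · subst hk; simp only [tw_0inf, zero_mul, add_zero] at *; grind
    · simp only [tw_minf _ _ _ _ hk, Equiv.Perm.one_apply]; grind
  case some.some.some.some =>
    grind

lemma full_inf (y : F × F) (hy : τ y.2 = y.2) :
    Full (Gr (tw c hc τ 1)) (none, some y) := by
  have hx' : τ.symm y.2 = y.2 := by rw [Equiv.symm_apply_eq, hy]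
  have hinj : ∀ z, τ z = y.2 → z = y.2 := fun z hz => τ.injective (hz.trans hy.symm)
  refine full_of_label _ _ (fun w => match w with
    | (_, none) => none
    | (none, some z) => none
    | (some k, some z) => some (z.2 - k * y.2)) ?_
  rintro ⟨_ | j, _ | ⟨z1, z2⟩⟩ ⟨_ | k, _ | ⟨w1, w2⟩⟩ h1 h2 h3 h4 h5 <;>
    simp only [RR, tw_0inf, tw_infinf, tw_mn1, ell, Equiv.Perm.one_apply, reduceCtorEq,
      Option.some.injEq, not_true, zero_mul, add_zero] at h1 h2 ⊢
  case none.some.none.some => grind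
  case none.some.some.some =>
    by_cases hk : k = 0
    · subst hk; simp only [tw_inf0, zero_mul, add_zero] at *; grind
    · simp only [tw_infm _ _ _ _ hk, Equiv.Perm.one_apply] at *; grind
  case some.some.none.some =>
    by_cases hk : j = 0
    · subst hk; simp only [tw_inf0, tw_0inf, zero_mul, add_zero] at *; grind
    · simp only [tw_infm _ _ _ _ hk, tw_minf _ _ _ _ hk, Equiv.Perm.one_apply] at *; grind
  case some.some.some.some =>
    have hz : z1 = y.2 + j * y.1 := by
      by_cases hk : j = 0
      · subst hk; simp only [tw_inf0, tw_0inf, zero_mul, add_zero] at *; grind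
      · simp only [tw_infm _ _ _ _ hk, tw_minf _ _ _ _ hk, Equiv.Perm.one_apply] at *; grind
    have hw : w1 = y.2 + k * y.1 := by
      by_cases hk : k = 0
      · subst hk; simp only [tw_inf0, tw_0inf, zero_mul, add_zero] at *; grind
      · simp only [tw_infm _ _ _ _ hk, tw_minf _ _ _ _ hk, Equiv.Perm.one_apply] at *; grind
    subst hz hw
    constructor <;> intro h <;> linear_combination -h
end one
end WqM

set_option linter.unusedSectionVars false
set_option linter.unusedSimpArgs false
namespace WqM
variable {F : Type} [Field F]

/-- points of a line of the untwisted quadrangle -/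
def Pt (α β γ : F) (i : Option F) : F × F :=
  match i with
  | none => (β, α)
  | some n => (α + β * n, γ + α * n)

lemma ell_Pt (α β γ : F) (i j : Option F) : ell i (Pt α β γ j) = ell j (Pt α β γ i) := by
  rcases i with _ | i <;> rcases j with _ | j <;> simp only [ell, Pt] <;> ring

lemma RR_Pt (T : Tw F) (α β γ : F) (i j : Option F) :
    RR T (i, some (Pt α β γ i)) (j, some (Pt α β γ j)) ↔
      ell i (Pt α β γ j) = T.s i j (ell i (Pt α β γ j)) := by
  simp only [RR]; rw [ell_Pt α β γ j i]

lemma nonfull (T : Tw F) (i j k l : Option F) (x y z w : F × F)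
    (hij : i ≠ j) (hik : i ≠ k) (hil : i ≠ l) (hjk : j ≠ k) (hkl : k ≠ l) (hjl : j ≠ l)
    (h1 : RR T (i, some x) (j, some y)) (h2 : RR T (i, some x) (k, some z))
    (h3 : RR T (i, some x) (l, some w)) (h4 : RR T (j, some y) (k, some z))
    (h5 : RR T (k, some z) (l, some w)) (h6 : ¬ RR T (j, some y) (l, some w)) :
    ¬ Full (Gr T) (i, some x) := by
  intro h
  have ne : ∀ {a b : Option F} {u v : F × F}, a ≠ b → ((a, some u) : VV F) ≠ (b, some v) :=
    fun hab e => hab (congrArg Prod.fst e)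
  exact h6 (h (j, some y) (k, some z) (l, some w) ⟨ne hij, h1⟩ ⟨ne hik, h2⟩ ⟨ne hil, h3⟩
    ⟨ne hjk, h4⟩ ⟨ne hkl, h5⟩ (ne hjl)).2

section two
variable (c : F) (hc : c ≠ 1) (τ τ' : Equiv.Perm F)

lemma RR_line (α β γ : F) (i j : Option F)
    (h : (i = some 0 ∧ j = none) ∨ (i = none ∧ j = some 0) → τ α = α)
    (h' : (i = some 1 ∧ j = some c) ∨ (i = some c ∧ j = some 1) →
      τ' (γ + α * (1 + c) + β * c) = γ + α * (1 + c) + β * c) :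
    RR (tw c hc τ τ') (i, some (Pt α β γ i)) (j, some (Pt α β γ j)) := by
  rw [RR_Pt]
  by_cases h1 : i = some 0 ∧ j = none
  · obtain ⟨rfl, rfl⟩ := h1
    simp [tw_0inf, ell, Pt, h]
  by_cases h2 : i = none ∧ j = some 0
  · obtain ⟨rfl, rfl⟩ := h2
    simp [tw_inf0, ell, Pt, h, Equiv.eq_symm_apply]
  by_cases h3 : i = some 1 ∧ j = some c
  · obtain ⟨rfl, rfl⟩ := h3
    have e : ell (some 1) (Pt α β γ (some c)) = γ + α * (1 + c) + β * c := by
      simp only [ell, Pt]; ring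
    rw [tw_1c, e, h' (by simp)]
  by_cases h4 : i = some c ∧ j = some 1
  · obtain ⟨rfl, rfl⟩ := h4
    have e : ell (some c) (Pt α β γ (some 1)) = γ + α * (1 + c) + β * c := by
      simp only [ell, Pt]; ring
    rw [tw_c1, e, Equiv.eq_symm_apply, h' (by simp)]
  simp [tw, twf, h1, h2, h3, h4]

lemma RR_line_0inf (α β γ : F) 
    (h : RR (tw c hc τ τ') (some 0, some (Pt α β γ (some 0))) (none, some (Pt α β γ none))) :
    τ α = α := by
  rw [RR_Pt] at h
  simp [tw_0inf, ell, Pt] at h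
  exact h.symm

lemma RR_line_1c (α β γ : F) 
    (h : RR (tw c hc τ τ') (some 1, some (Pt α β γ (some 1))) (some c, some (Pt α β γ (some c)))) :
    τ' (γ + α * (1 + c) + β * c) = γ + α * (1 + c) + β * c := by
  have e : ell (some 1) (Pt α β γ (some c)) = γ + α * (1 + c) + β * c := by
    simp only [ell, Pt]; ring
  rw [RR_Pt, tw_1c, e] at h
  exact h.symm

lemma exists_third {c : F} (hc : c ≠ 1) (hc0 : c ≠ 0) (m : F) : ∃ k : F, k ≠ 0 ∧ k ≠ m := by
  by_cases h : m = 1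
  · exact ⟨c, hc0, h ▸ hc⟩
  · exact ⟨1, one_ne_zero, fun e => h e.symm⟩

lemma nonfull_fin (hc0 : c ≠ 0) (m : F) (hm : m ≠ 0) (x : F × F) (α : F) (hα : τ α ≠ α)
    (h1 : m = 1 → τ' (ell (some c) x) = ell (some c) x)
    (h2 : m = c → τ' (ell (some 1) x) = ell (some 1) x) :
    ¬ Full (Gr (tw c hc τ τ')) (some m, some x) := by
  obtain ⟨k, hk0, hkm⟩ := exists_third hc hc0 m
  have hx : x = Pt α ((x.1 - α) / m) (x.2 - α * m) (some m) := by
    ext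
    · simp only [Pt]; field_simp; ring
    · simp only [Pt]; ring
  generalize hβ : (x.1 - α) / m = β at hx
  generalize hγ : x.2 - α * m = γ at hx
  subst hx
  refine nonfull _ _ (some 0) (some k) none _ (Pt α β γ (some 0)) (Pt α β γ (some k)) (Pt α β γ none)
    (by simpa using hm) (by simpa using hkm.symm) (by simp) (by simpa using hk0.symm) (by simp)
    (by simp) (RR_line _ _ _ _ _ _ _ _ _ ?_ ?_) (RR_line _ _ _ _ _ _ _ _ _ ?_ ?_)
    (RR_line _ _ _ _ _ _ _ _ _ ?_ ?_) (RR_line _ _ _ _ _ _ _ _ _ ?_ ?_)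
    (RR_line _ _ _ _ _ _ _ _ _ ?_ ?_) (fun h => hα (RR_line_0inf _ _ _ _ _ _ _ h))
  · simp
  · simp [hc0.symm]
  · simp
  · have e1 : ell (some c) (Pt α β γ (some 1)) = γ + α * (1 + c) + β * c := by
      simp only [ell, Pt]; ring
    have e2 : ell (some 1) (Pt α β γ (some c)) = γ + α * (1 + c) + β * c := by
      simp only [ell, Pt]; ring
    rintro (⟨h, -⟩ | ⟨h, -⟩)
    · simp only [Option.some.injEq] at h
      subst h; rw [← e1]; exact h1 rfl
    · simp only [Option.some.injEq] at h
      subst h; rw [← e2]; exact h2 rfl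
  · simp [hm]
  · simp
  · simp
  · simp [hc0.symm]
  · simp [hk0]
  · simp

/-- a clique of size `q + 1` without full vertices -/
def Clq (F : Type) {V : Type} (G : SimpleGraph V) : Prop :=
  ∃ K : Option F → V, (∀ a b, a ≠ b → G.Adj (K a) (K b)) ∧ ∀ a, ¬ Full G (K a)

lemma Clq_iso {V W : Type} {G : SimpleGraph V} {H : SimpleGraph W} (φ : G ≃g H) (h : Clq F G) :
    Clq F H := by
  obtain ⟨K, h1, h2⟩ := h
  exact ⟨fun a => φ (K a), fun a b hab => φ.map_adj_iff.2 (h1 a b hab),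
    fun a ha => h2 a ((Full_iso φ _).1 ha)⟩

lemma two_clq (hc0 : c ≠ 0) (α0 α1 w0 w1 : F) (h0 : τ α0 = α0) (h1 : τ α1 ≠ α1)
    (h2 : τ' w0 = w0) (h3 : τ' w1 ≠ w1) : Clq F (Gr (tw c hc τ τ')) := by
  have ew : w0 - α0 * (1 + c) + α0 * (1 + c) + 0 * c = w0 := by ring
  refine ⟨fun i => (i, some (Pt α0 0 (w0 - α0 * (1 + c)) i)), ?_, ?_⟩
  · intro i j hij
    refine ⟨fun e => hij (congrArg Prod.fst e), RR_line _ _ _ _ _ _ _ _ _ (fun _ => h0) (fun _ => ?_)⟩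
    rw [ew, h2]
  · rintro (_ | m)
    · have : Pt α0 0 (w0 - α0 * (1 + c)) none = Pt α0 0 (w1 - α0 * (1 + c)) none := rfl
      simp only [this]
      generalize hγ : w1 - α0 * (1 + c) = γ
      refine nonfull _ _ (some 1) (some 0) (some c) _ (Pt α0 0 γ (some 1)) (Pt α0 0 γ (some 0))
        (Pt α0 0 γ (some c)) (by simp) (by simp) (by simp) (by simp) (by simpa using hc0.symm)
        (by simpa using hc.symm)  (RR_line _ _ _ _ _ _ _ _ _ (fun _ => h0) (by simp))
        (RR_line _ _ _ _ _ _ _ _ _ (fun _ => h0) (by simp))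
        (RR_line _ _ _ _ _ _ _ _ _ (fun _ => h0) (by simp))
        (RR_line _ _ _ _ _ _ _ _ _ (fun _ => h0) (by simp [hc0.symm]))
        (RR_line _ _ _ _ _ _ _ _ _ (fun _ => h0) (by simp [hc0.symm])) (fun h => h3 ?_)
      have := RR_line_1c _ _ _ _ _ _ _ h
      have e : γ + α0 * (1 + c) + 0 * c = w1 := by rw [← hγ]; ring
      rwa [e] at this
    · by_cases hm : m = 0
      · subst hm
        have : Pt α0 0 (w0 - α0 * (1 + c)) (some 0) = Pt α0 ((w1 - w0) / c) (w0 - α0 * (1 + c)) (some 0) := by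
          simp [Pt]
        simp only [this]
        generalize hγ : w0 - α0 * (1 + c) = γ
        generalize hβ : (w1 - w0) / c = β
        refine nonfull _ _ (some 1) none (some c) _ (Pt α0 β γ (some 1)) (Pt α0 β γ none)
          (Pt α0 β γ (some c)) (by simp) (by simp) (by simpa using hc0.symm) (by simp) (by simp)
          (by simpa using hc.symm)  (RR_line _ _ _ _ _ _ _ _ _ (fun _ => h0) (by simp [hc0.symm]))
          (RR_line _ _ _ _ _ _ _ _ _ (fun _ => h0) (by simp))
          (RR_line _ _ _ _ _ _ _ _ _ (fun _ => h0) (by simp [hc0.symm]))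
          (RR_line _ _ _ _ _ _ _ _ _ (fun _ => h0) (by simp))
          (RR_line _ _ _ _ _ _ _ _ _ (fun _ => h0) (by simp)) (fun h => h3 ?_)
        have := RR_line_1c _ _ _ _ _ _ _ h
        have e : γ + α0 * (1 + c) + β * c = w1 := by rw [← hγ, ← hβ]; field_simp; ring
        rwa [e] at this
      · refine nonfull_fin c hc τ τ' hc0 m hm _ α1 h1 ?_ ?_
        · rintro rfl
          have : ell (some c) (Pt α0 0 (w0 - α0 * (1 + c)) (some 1)) = w0 := by
            simp only [ell, Pt]; ring
          rw [this, h2]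
        · rintro rfl
          have : ell (some 1) (Pt α0 0 (w0 - α0 * (1 + m)) (some m)) = w0 := by
            simp only [ell, Pt]; ring
          rw [this, h2]
end two

section one
variable (c : F) (hc : c ≠ 1) (τ : Equiv.Perm F)

lemma nonfull_zero (hc0 : c ≠ 0) (x : F × F) (hx : τ x.1 ≠ x.1) :
    ¬ Full (Gr (tw c hc τ 1)) (some 0, some x) := by
  refine nonfull _ _ (some c) (some 1) none _ (x.1, x.2 + c * x.1) (x.1, x.2 + x.1)
    (x.1 - τ x.1, τ x.1) (by simpa using hc0.symm) (by simp) (by simp) (by simpa using hc) (by simp)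
    (by simp) ?_ ?_ ?_ ?_ ?_ ?_ <;>
    simp only [RR, tw_mn1, tw_0inf, tw_minf _ _ _ _ hc0, tw_minf _ _ _ _ one_ne_zero, ell,
      Equiv.Perm.one_apply]
  · ring
  · ring
  · ring
  · ring
  · ring
  · intro h
    have : (c - 1) * (x.1 - τ x.1) = 0 := by linear_combination h
    rcases mul_eq_zero.1 this with h | h
    · exact hc (sub_eq_zero.1 h)
    · exact hx (sub_eq_zero.1 h).symm

lemma nonfull_inf (hc0 : c ≠ 0) (y : F × F) (hy : τ y.2 ≠ y.2) :
    ¬ Full (Gr (tw c hc τ 1)) (none, some y) := by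
  have hu : τ.symm y.2 ≠ y.2 := fun h => hy (by rw [Equiv.symm_apply_eq] at h; exact h.symm)
  refine nonfull _ _ (some c) (some 1) (some 0) _ (y.2 + c * y.1, c * y.2) (y.2 + y.1, y.2)
    (τ.symm y.2, y.2 - τ.symm y.2) (by simp) (by simp) (by simp) (by simpa using hc) (by simp)
    (by simpa using hc0) ?_ ?_ ?_ ?_ ?_ ?_ <;>
    simp only [RR, tw_mn1, tw_inf0, tw_infm _ _ _ _ hc0, tw_infm _ _ _ _ one_ne_zero, ell,
      Equiv.Perm.one_apply, zero_mul, add_zero]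
  · ring
  · ring
  · ring
  · intro h
    have : (c - 1) * (τ.symm y.2 - y.2) = 0 := by linear_combination h
    rcases mul_eq_zero.1 this with h | h
    · exact hc (sub_eq_zero.1 h)
    · exact hu (sub_eq_zero.1 h)

lemma same_class (T : Tw F) [Fintype F] (K : Option F → VV F) (h : ∀ a b, a ≠ b → (Gr T).Adj (K a) (K b))
    (hK : ∀ a, ∃ x, (K a).2 = some x) : Function.Injective (fun a => (K a).1) := by
  choose x hx using hK
  have hKe : ∀ a, K a = ((K a).1, some (x a)) := fun a => by rw [← hx a]
  have hinj : ∀ a b, a ≠ b → (K a).1 = (K b).1 → x a ≠ x b := by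
    intro a b hab e1 e2
    apply (h a b hab).1
    rw [hKe a, hKe b, e1, e2]
  have hR : ∀ a b, a ≠ b → ell (K a).1 (x b) = T.s (K a).1 (K b).1 (ell (K b).1 (x a)) := by
    intro a b hab
    have := (h a b hab).2
    rw [hKe a, hKe b] at this
    exact this
  intro a b hab
  simp only at hab
  by_contra hne
  have all : ∀ d, (K d).1 = (K a).1 := by
    intro d
    by_contra hd
    have hda : d ≠ a := fun e => hd (by rw [e])
    have hdb : d ≠ b := fun e => hd (by rw [e, hab])
    have e1 := hR d a hda
    have e2 := hR d b hdb
    rw [← hab] at e2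
    have e3 := hR a b hne
    rw [← hab, T.refl] at e3
    exact hinj a b hne hab (ell_inj hd (e1.trans e2.symm) e3.symm)
  obtain ⟨j, hj⟩ : ∃ j : Option F, j ≠ (K a).1 := exists_ne _
  have : Function.Injective (fun d => ell j (x d)) := by
    intro d d' hdd
    by_contra hne
    have e3 := hR d d' hne
    rw [all d, all d', T.refl] at e3
    exact hinj d d' hne ((all d).trans (all d').symm) (ell_inj hj hdd e3.symm)
  have := Fintype.card_le_of_injective _ this
  simp at this

lemma one_not_clq [Fintype F] (hc0 : c ≠ 0) : ¬ Clq F (Gr (tw c hc τ 1)) := by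
  rintro ⟨K, h1, h2⟩
  have hK : ∀ a, ∃ x, (K a).2 = some x := by
    intro a
    rcases hka : K a with ⟨i, _ | x⟩
    · exact absurd (by rw [hka]; exact full_p _ _) (h2 a)
    · exact ⟨x, rfl⟩
  have hs := Finite.surjective_of_injective (same_class _ K h1 hK)
  have pts : ∀ i, ∃ x a, K a = (i, some x) := by
    intro i
    obtain ⟨a, ha⟩ := hs i
    obtain ⟨x, hx⟩ := hK a
    exact ⟨x, a, by rw [← ha, ← hx]⟩
  choose x a hxa using pts
  have hR : ∀ i j, i ≠ j → RR (tw c hc τ 1) (i, some (x i)) (j, some (x j)) := by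
    intro i j hij
    rw [← hxa i, ← hxa j]
    refine (h1 _ _ ?_).2
    intro e
    have := hxa i
    rw [e, hxa j] at this
    exact hij (congrArg Prod.fst this).symm
  apply h2 (a (some 0))
  rw [hxa]
  apply full_zero
  have r1 := hR (some 0) none (by simp)
  have r2 := hR (some 1) none (by simp)
  have r3 := hR (some c) none (by simp)
  have r4 := hR (some 0) (some 1) (by simp)
  have r5 := hR (some 0) (some c) (by simpa using hc0.symm)
  have r6 := hR (some 1) (some c) (by simpa using hc.symm)
  simp only [RR, tw_mn1, tw_0inf, tw_minf _ _ _ _ hc0, tw_minf _ _ _ _ one_ne_zero, ell,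
      Equiv.Perm.one_apply, zero_mul, add_zero] at r1 r2 r3 r4 r5 r6
  rw [← r1]
  have : (c - 1) * ((x none).2 - (x (some 0)).1) = 0 := by
    grind
  rcases mul_eq_zero.1 this with h | h
  · exact absurd (sub_eq_zero.1 h) hc
  · exact sub_eq_zero.1 h

lemma count_full [Fintype F] (hc0 : c ≠ 0) (α : F) (hα : τ α ≠ α) :
    (Finset.univ.filter (fun v => Full (Gr (tw c hc τ 1)) v)).card
      = Fintype.card F + 1 + 2 * Fintype.card F * (Finset.univ.filter (fun a => τ a = a)).card := by
  rw [card_VV_ind, card_ind]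
  have e1 : ∀ i : Option F, ind (Full (Gr (tw c hc τ 1)) (i, none)) = 1 := fun i => ind_of (full_p _ _)
  have e2 : ∀ x : F × F, Full (Gr (tw c hc τ 1)) (none, some x) = (τ x.2 = x.2) := fun x =>
    propext ⟨fun h => by by_contra hh; exact nonfull_inf c hc τ hc0 x hh h, full_inf c hc τ x⟩
  have e3 : ∀ x : F × F, Full (Gr (tw c hc τ 1)) (some 0, some x) = (τ x.1 = x.1) := fun x =>
    propext ⟨fun h => by by_contra hh; exact nonfull_zero c hc τ hc0 x hh h, full_zero c hc τ x⟩
  have e4 : ∀ m : F, m ≠ 0 → ∑ x : F × F, ind (Full (Gr (tw c hc τ 1)) (some m, some x)) = 0 := by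
    intro m hm
    refine Finset.sum_eq_zero (fun x _ => ind_not ?_)
    exact nonfull_fin c hc τ 1 hc0 m hm x α hα (fun _ => rfl) (fun _ => rfl)
  rw [Fintype.sum_option (f := fun i => ∑ x : F × F, ind (Full (Gr (tw c hc τ 1)) (i, some x)))]
  rw [Finset.sum_eq_single_of_mem (0 : F) (Finset.mem_univ _) (fun m _ hm => e4 m hm)]
  simp only [e1, e2, e3, Fintype.sum_prod_type]
  simp only [Finset.sum_const, Finset.card_univ, Fintype.card_option, smul_eq_mul, ← Finset.mul_sum]
  ring
end one

lemma exists_perm [Fintype F] (f : ℕ) (hf : f + 2 ≤ Fintype.card F) :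
    ∃ τ : Equiv.Perm F, (Finset.univ.filter (fun a => τ a = a)).card = f ∧ ∃ a, τ a ≠ a := by
  obtain ⟨τ, hτ⟩ := (Equiv.Perm.exists_with_cycleType_iff F (m := {Fintype.card F - f})).2
    ⟨by simp, by simp; omega⟩
  have hs := τ.sum_cycleType
  rw [hτ] at hs
  simp at hs
  have h2 : (Finset.univ.filter (fun a => τ a = a)) = τ.supportᶜ := by ext; simp
  refine ⟨τ, ?_, ?_⟩
  · rw [h2, Finset.card_compl, ← hs]; omega
  · have : τ.support.Nonempty := by rw [← Finset.card_pos, ← hs]; omega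
    obtain ⟨a, ha⟩ := this
    exact ⟨a, by simpa using ha⟩

end WqM
open WqM

theorem exists_q_cospectral_mates_of_Wq (F : Type) [Field F] [Fintype F] (q : ℕ)
    (hq : Fintype.card F = q) (hq3 : 3 ≤ q) :
    ∃ G : Fin q → SimpleGraph (Fin (q ^ 3 + q ^ 2 + q + 1)),
      (∀ i, (G i).IsSRGWith (q ^ 3 + q ^ 2 + q + 1) (q ^ 2 + q) (q - 1) (q + 1)) ∧
      (∀ i j, i ≠ j → ¬ Nonempty (G i ≃g G j)) ∧
      (∀ i, ∀ Q : GenQuadrangle q q, ¬ Nonempty (G i ≃g Q.collinearityGraph)) ∧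
      (∀ i, ¬ Nonempty (G i ≃g spGraph F)) := by
  obtain ⟨c, hc0, hc⟩ : ∃ c : F, c ≠ 0 ∧ c ≠ 1 := by
    by_contra hh
    push Not at hh
    have : (Finset.univ : Finset F) ⊆ {0, 1} := by
      intro x _
      by_cases h : x = 0
      · simp [h]
      · simp [hh x h]
    have := (Finset.card_le_card this).trans Finset.card_le_two
    rw [Finset.card_univ] at this
    omega
  have hT : ∀ i : Fin q, ∃ T : Tw F, (∃ v, ¬ Full (Gr T) v) ∧
      (i.val = q - 1 → Clq F (Gr T)) ∧
      (i.val ≠ q - 1 → ¬ Clq F (Gr T) ∧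
        (Finset.univ.filter (fun v => Full (Gr T) v)).card = q + 1 + 2 * q * i.val) := by
    intro i
    by_cases hi : i.val = q - 1
    · obtain ⟨τ, h1, a, ha⟩ := exists_perm (F := F) 1 (by omega)
      obtain ⟨b, hb⟩ := Finset.card_pos.1 (by rw [h1]; exact one_pos)
      have hb' : τ b = b := by simpa using hb
      have := two_clq c hc τ τ hc0 b a b a hb' ha hb' ha
      refine ⟨tw c hc τ τ, ?_, fun _ => this, fun h => absurd hi h⟩
      obtain ⟨K, -, hK⟩ := this
      exact ⟨K none, hK none⟩
    · obtain ⟨τ, h1, a, ha⟩ := exists_perm (F := F) i.val (by have := i.2; omega)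
      refine ⟨tw c hc τ 1, ⟨_, nonfull_zero c hc τ hc0 (a, 0) ha⟩, fun h => absurd h hi,
        fun _ => ⟨one_not_clq c hc τ hc0, ?_⟩⟩
      rw [count_full c hc τ hc0 a ha, h1, hq]
  choose T hnf hclq hoth using hT
  have hcard : Fintype.card (Fin (q ^ 3 + q ^ 2 + q + 1)) = Fintype.card (VV F) := by
    rw [card_VV, hq, Fintype.card_fin]
  obtain ⟨e⟩ := Fintype.card_eq.1 hcard
  have iso : ∀ i, Nonempty ((Gr (T i)).comap e ≃g Gr (T i)) := fun i =>
    ⟨SimpleGraph.Iso.comap e (Gr (T i))⟩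
  have notfull : ∀ i, ∀ {W : Type} (H : SimpleGraph W), (∀ w, Full H w) →
      ¬ Nonempty ((Gr (T i)).comap e ≃g H) := by
    rintro i W H hH ⟨φ⟩
    obtain ⟨ψ⟩ := iso i
    obtain ⟨v, hv⟩ := hnf i
    exact hv (Full_iso' (ψ.symm.trans φ) (hH _))
  refine ⟨fun i => (Gr (T i)).comap e, ?_, ?_, ?_, ?_⟩
  · intro i
    exact srg_transport (T i) e q hq hq3 rfl
  · rintro i j hij ⟨φ⟩
    obtain ⟨ψi⟩ := iso i
    obtain ⟨ψj⟩ := iso j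
    have χ : Gr (T i) ≃g Gr (T j) := (ψi.symm.trans φ).trans ψj
    by_cases hi : i.val = q - 1
    · have hj : j.val ≠ q - 1 := fun h => hij (Fin.ext (hi.trans h.symm))
      exact (hoth j hj).1 (Clq_iso χ (hclq i hi))
    · by_cases hj : j.val = q - 1
      · exact (hoth i hi).1 (Clq_iso χ.symm (hclq j hj))
      · have e1 := (hoth i hi).2
        have e2 := (hoth j hj).2
        have e3 : (Finset.univ.filter (fun v => Full (Gr (T i)) v)).card
            = (Finset.univ.filter (fun v => Full (Gr (T j)) v)).card := by
          refine Finset.card_equiv χ.toEquiv (fun v => ?_)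
          simp only [Finset.mem_filter, Finset.mem_univ, true_and]
          exact (Full_iso χ v).symm
        rw [e1, e2] at e3
        apply hij
        apply Fin.ext
        have : 0 < 2 * q := by omega
        exact Nat.eq_of_mul_eq_mul_left this (by omega)
  · intro i Q
    exact notfull i _ (gq_full Q)
  · intro i
    exact notfull i _ symp_full
end

section
/- Let q be an odd prime power. There exists a strongly regular graph with parameters ((q²+1)(q³+1), q²(q+1), q²−1, q+1) (hence cospectral with the collinearity graph of the Hermitian generalized quadrangle H(3,q²)) that is not isomorphic to the collinearity graph of any generalized quadrangle of order (q²,q). -/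
open scoped Classical

namespace HGQ
set_option linter.unusedSectionVars false
set_option linter.unnecessarySeqFocus false

abbrev M (F : Type) := (F × F) × (F × F)
abbrev Vt (F : Type) := Unit ⊕ ((Option F × (F × F)) ⊕ (M F × F))

section
variable {F : Type} [Field F]

def dt (X : M F) : F := X.1.1 * X.2.2 - X.1.2 * X.2.1
def om (n : F) (X Y : M F) : F :=
  X.1.1 * Y.2.1 - n * X.1.2 * Y.2.2 - X.2.1 * Y.1.1 + n * X.2.2 * Y.1.2
def ph : Option F → M F → F × F
  | none, X => (X.1.1, X.2.1)
  | some l, X => (X.1.2 - l * X.1.1, X.2.2 - l * X.2.1)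
def Xp : Option F → F × F → M F
  | none, u => ((0, 0), u)
  | some m, u => (u, (m * u.1, m * u.2))
def Ed : Option F → M F → F × F
  | none, D => (-D.1.1, -D.1.2)
  | some m, D => (D.2.1 - m * D.1.1, D.2.2 - m * D.1.2)

def adj (n : F) : Vt F → Vt F → Prop
  | .inl _, .inl _ => False
  | .inl _, .inr (.inl _) => True
  | .inl _, .inr (.inr _) => False
  | .inr (.inl _), .inl _ => True
  | .inr (.inl x), .inr (.inl y) => x.1 = y.1 ∧ x.2 ≠ y.2
  | .inr (.inl x), .inr (.inr z) => ph x.1 z.1 = x.2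
  | .inr (.inr _), .inl _ => False
  | .inr (.inr z), .inr (.inl x) => ph x.1 z.1 = x.2
  | .inr (.inr z), .inr (.inr w) => w.1 - z.1 ≠ 0 ∧ dt (w.1 - z.1) = 0 ∧ z.2 - w.2 = om n z.1 w.1

def gr (n : F) : SimpleGraph (Vt F) where
  Adj := adj n
  symm := ⟨by
    rintro (x | x | x) (y | y | y) h <;> simp only [adj] at h ⊢
    · exact ⟨h.1.symm, h.2.symm⟩
    · exact h
    · exact h
    · obtain ⟨h1, h2, h3⟩ := h
      refine ⟨fun h => h1 (by rw [← neg_sub, h, neg_zero]), ?_, ?_⟩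
      · simp only [dt, Prod.fst_sub, Prod.snd_sub] at h2 ⊢
        linear_combination h2
      · simp only [om] at h3 ⊢
        linear_combination -h3⟩
  loopless := ⟨by rintro (x | x | x) h <;> simp [adj] at h⟩

lemma aniso {n : F} (hn : ¬ IsSquare n) {e f : F} (h : ¬ (e = 0 ∧ f = 0)) :
    e * e - n * f * f ≠ 0 := by
  intro h0
  by_cases hf : f = 0
  · subst hf; apply h; simpa using h0
  · apply hn
    refine ⟨e / f, ?_⟩
    field_simp
    linear_combination -h0

lemma solve {n : F} (hn : ¬ IsSquare n) {e f : F} (h : ¬ (e = 0 ∧ f = 0)) (A B : F) (u : F × F) :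
    (u.1 * f - u.2 * e = A ∧ u.1 * e - n * u.2 * f = B) ↔
    u = ((B * e - n * f * A) / (e * e - n * f * f), (B * f - A * e) / (e * e - n * f * f)) := by
  have := aniso hn h
  rw [Prod.ext_iff]
  simp only
  rw [eq_div_iff this, eq_div_iff this]
  constructor
  · rintro ⟨h1, h2⟩
    constructor
    · rw [← h1, ← h2]; ring
    · rw [← h1, ← h2]; ring
  · rintro ⟨h1, h2⟩
    constructor
    · apply mul_right_cancel₀ this; linear_combination f * h1 - e * h2
    · apply mul_right_cancel₀ this; linear_combination e * h1 - n * f * h2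

lemma dt_Xp (δ : Option F) (u : F × F) : dt (Xp δ u) = 0 := by
  cases δ <;> simp [dt, Xp]; ring

lemma Xp_ne {δ : Option F} {u : F × F} : Xp δ u = 0 ↔ u = 0 := by
  cases δ <;> simp [Xp, Prod.ext_iff] <;> grind

lemma Xp_inj {δ : Option F} {u v : F × F} : Xp δ u = Xp δ v ↔ u = v := by
  cases δ <;> simp [Xp, Prod.ext_iff] <;> grind

lemma dt_sub (δ : Option F) (u : F × F) (D : M F) :
    dt (Xp δ u - D) = 0 ↔ u.1 * (Ed δ D).2 - u.2 * (Ed δ D).1 = dt D := by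
  cases δ <;> simp only [dt, Xp, Ed, Prod.fst_sub, Prod.snd_sub] <;> constructor <;> intro h <;> linear_combination -h

lemma om_X (n : F) (δ : Option F) (u : F × F) (D : M F) (τ : F) :
    om n D (Xp δ u) = τ ↔ u.1 * (Ed δ D).1 - n * u.2 * (Ed δ D).2 = -τ := by
  cases δ <;> simp only [om, Xp, Ed] <;> constructor <;> intro h <;> linear_combination -h

lemma Ed_zero {δ : Option F} {D : M F} (h : (Ed δ D).1 = 0 ∧ (Ed δ D).2 = 0) :
    ∃ u, D = Xp δ u := by
  cases δ with
  | none => exact ⟨D.2, by simp [Ed] at h; simp [Xp, Prod.ext_iff, h]⟩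
  | some m => exact ⟨D.1, by simp [Ed] at h; simp [Xp, Prod.ext_iff]; grind⟩

lemma Ed_unique {D : M F} (h0 : D ≠ 0) (h : dt D = 0) :
    ∃ δ₀, ∀ δ, ((Ed δ D).1 = 0 ∧ (Ed δ D).2 = 0) ↔ δ = δ₀ := by
  obtain ⟨⟨a, b⟩, ⟨c, d⟩⟩ := D
  simp only [dt] at h
  simp only [ne_eq, Prod.mk_eq_zero] at h0
  by_cases hab : a = 0 ∧ b = 0
  · refine ⟨none, fun δ => ?_⟩
    cases δ <;> simp [Ed] <;> grind
  · by_cases ha : a = 0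
    · refine ⟨some (d / b), fun δ => ?_⟩
      have : b ≠ 0 := by grind
      cases δ <;> simp [Ed] <;> grind
    · refine ⟨some (c / a), fun δ => ?_⟩
      cases δ <;> simp [Ed] <;> grind

lemma Ed_ne {D : M F} (h : dt D ≠ 0) (δ : Option F) : ¬ ((Ed δ D).1 = 0 ∧ (Ed δ D).2 = 0) := by
  intro h'
  obtain ⟨u, rfl⟩ := Ed_zero h'
  exact h (dt_Xp _ _)

lemma ph_unique {D : M F} (h0 : D ≠ 0) (h : dt D = 0) :
    ∃ δ₀, ∀ δ, ph δ D = 0 ↔ δ = δ₀ := by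
  obtain ⟨⟨a, b⟩, ⟨c, d⟩⟩ := D
  simp only [dt] at h
  simp only [ne_eq, Prod.mk_eq_zero] at h0
  by_cases hab : a = 0 ∧ c = 0
  · refine ⟨none, fun δ => ?_⟩
    cases δ <;> simp [ph] <;> grind
  · by_cases ha : a = 0
    · refine ⟨some (d / c), fun δ => ?_⟩
      have : c ≠ 0 := by grind
      cases δ <;> simp [ph] <;> grind
    · refine ⟨some (b / a), fun δ => ?_⟩
      cases δ <;> simp [ph] <;> grind

lemma ph_ne {D : M F} (h : dt D ≠ 0) (δ : Option F) : ph δ D ≠ 0 := by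
  intro h'
  apply h
  cases δ <;> simp [ph, dt] at h' ⊢ <;> grind

lemma ph_sub (δ : Option F) (X Y : M F) : ph δ (X - Y) = ph δ X - ph δ Y := by
  cases δ <;> simp [ph] <;> grind

lemma ph_add (δ : Option F) (X Y : M F) : ph δ (X + Y) = ph δ X + ph δ Y := by
  cases δ <;> simp [ph] <;> grind

noncomputable def paramE (p : M F → Prop) :
    (Σ δ : Option F, {u : F × F // u ≠ 0 ∧ p (Xp δ u)}) ≃ {X : M F // X ≠ 0 ∧ dt X = 0 ∧ p X} :=
  Equiv.ofBijective (fun s => ⟨Xp s.1 s.2.1, fun h => s.2.2.1 (Xp_ne.1 h), dt_Xp _ _, s.2.2.2⟩) (by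
    constructor
    · rintro ⟨δ, u, hu, hp⟩ ⟨δ', u', hu', hp'⟩ h
      simp only [Subtype.mk.injEq] at h
      have : δ = δ' := by
        cases δ <;> cases δ' <;> simp [Xp, Prod.ext_iff] at h hu hu' ⊢ <;> grind
      subst this
      have := Xp_inj.1 h
      subst this
      rfl
    · rintro ⟨X, h0, hd, hp⟩
      obtain ⟨δ₀, h⟩ := Ed_unique h0 hd
      obtain ⟨u, rfl⟩ := Ed_zero ((h δ₀).2 rfl)
      exact ⟨⟨δ₀, u, fun h => h0 (Xp_ne.2 h), hp⟩, rfl⟩)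

variable [Fintype F]

lemma card_sing (p : M F → Prop) : Nat.card {X : M F // X ≠ 0 ∧ dt X = 0 ∧ p X} =
    ∑ δ : Option F, Nat.card {u : F × F // u ≠ 0 ∧ p (Xp δ u)} := by
  rw [← Nat.card_congr (paramE p), Nat.card_sigma]

lemma card_ne {A : Type} [Finite A] (a : A) : Nat.card {x : A // x ≠ a} = Nat.card A - 1 := by
  have := Fintype.ofFinite A
  rw [Nat.card_eq_fintype_card, Nat.card_eq_fintype_card]
  simp [Fintype.card_subtype_compl]

lemma card_ne2 {A : Type} [Finite A] {a b : A} (h : a ≠ b) :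
    Nat.card {x : A // x ≠ a ∧ x ≠ b} = Nat.card A - 2 := by
  have := Fintype.ofFinite A
  rw [Nat.card_eq_fintype_card, Nat.card_eq_fintype_card, Fintype.card_subtype]
  have : (Finset.univ.filter fun x : A => x ≠ a ∧ x ≠ b) = Finset.univ \ {a, b} := by
    ext x; simp
  rw [this, Finset.card_sdiff_of_subset (Finset.subset_univ _), Finset.card_pair h, Finset.card_univ]

lemma card_one {A : Type} {p : A → Prop} (a : A) (h : ∀ x, p x ↔ x = a) :
    Nat.card {x : A // p x} = 1 := by
  simp [h]

lemma card_zero {A : Type} {p : A → Prop} (h : ∀ x, ¬ p x) :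
    Nat.card {x : A // p x} = 0 := by
  simp [h]

/-- singular nonzero count -/
lemma card_sing0 : Nat.card {X : M F // X ≠ 0 ∧ dt X = 0} =
    (Nat.card F + 1) * (Nat.card F ^ 2 - 1) := by
  have := card_sing (F := F) (fun _ => True)
  simp only [and_true] at this
  rw [this]
  simp only [card_ne, Nat.card_prod, Finset.sum_const, Finset.card_univ, Fintype.card_option]
  rw [Nat.card_eq_fintype_card, sq]
  simp

def pr (n : F) (D : M F) (τ : F) (X : M F) : Prop := X ≠ D ∧ dt (X - D) = 0 ∧ om n D X = τ

lemma loc1 {n : F} (hn : ¬ IsSquare n) {D : M F} {τ : F} {δ : Option F}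
    (hE : ¬ ((Ed δ D).1 = 0 ∧ (Ed δ D).2 = 0)) (h : dt D ≠ 0 ∨ τ ≠ 0) :
    Nat.card {u : F × F // u ≠ 0 ∧ pr n D τ (Xp δ u)} = 1 := by
  have key := solve hn hE (dt D) (-τ)
  apply card_one
  intro u
  rw [← key u, pr, dt_sub, om_X]
  constructor
  · tauto
  · rintro ⟨h1, h2⟩
    refine ⟨?_, ?_, h1, h2⟩
    · rintro rfl; simp at h1 h2; grind
    · rintro rfl
      rcases h with h | h
      · exact h (dt_Xp _ _)
      · rw [← om_X] at h2
        apply h; rw [← h2]; simp only [om]; ring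

lemma loc2 {n : F} (hn : ¬ IsSquare n) {D : M F} {δ : Option F}
    (hE : ¬ ((Ed δ D).1 = 0 ∧ (Ed δ D).2 = 0)) (h : dt D = 0) :
    Nat.card {u : F × F // u ≠ 0 ∧ pr n D 0 (Xp δ u)} = 0 := by
  have key := solve hn hE (dt D) (-0)
  apply card_zero
  rintro u ⟨h0, h1, h2, h3⟩
  rw [dt_sub] at h2
  rw [om_X] at h3
  have := (key u).1 ⟨h2, h3⟩
  apply h0
  rw [this, h]; simp

lemma loc3 {n : F} {D : M F} {τ : F} {δ : Option F}
    (hE : ((Ed δ D).1 = 0 ∧ (Ed δ D).2 = 0)) (h : τ ≠ 0) :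
    Nat.card {u : F × F // u ≠ 0 ∧ pr n D τ (Xp δ u)} = 0 := by
  apply card_zero
  rintro u ⟨h0, h1, h2, h3⟩
  rw [om_X, hE.1, hE.2] at h3
  simp at h3; grind

lemma loc4 {n : F} {D : M F} {δ : Option F}
    (hE : ((Ed δ D).1 = 0 ∧ (Ed δ D).2 = 0)) (h : D ≠ 0) :
    Nat.card {u : F × F // u ≠ 0 ∧ pr n D 0 (Xp δ u)} = Nat.card F ^ 2 - 2 := by
  obtain ⟨v, rfl⟩ := Ed_zero hE
  have hv : (0 : F × F) ≠ v := fun h' => h (Xp_ne.2 h'.symm)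
  rw [sq, ← Nat.card_prod, ← card_ne2 hv]
  refine Nat.card_congr (Equiv.subtypeEquivRight fun u => ?_)
  rw [pr, dt_sub, om_X, hE.1, hE.2, dt_Xp, ne_eq, ne_eq, ne_eq, Xp_inj]
  simp

lemma cnt_a {n : F} (hn : ¬ IsSquare n) {D : M F} (τ : F) (h : dt D ≠ 0) :
    Nat.card {X : M F // X ≠ 0 ∧ dt X = 0 ∧ pr n D τ X} = Nat.card F + 1 := by
  rw [card_sing, Finset.sum_congr rfl fun δ _ => loc1 hn (Ed_ne h δ) (Or.inl h)]
  simp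

lemma cnt_b {n : F} (hn : ¬ IsSquare n) {D : M F} {τ : F} (h0 : D ≠ 0) (h : dt D = 0) (hτ : τ ≠ 0) :
    Nat.card {X : M F // X ≠ 0 ∧ dt X = 0 ∧ pr n D τ X} = Nat.card F := by
  obtain ⟨δ₀, hδ⟩ := Ed_unique h0 h
  have : ∀ δ, Nat.card {u : F × F // u ≠ 0 ∧ pr n D τ (Xp δ u)} = if δ = δ₀ then 0 else 1 := by
    intro δ
    split_ifs with hd
    · exact loc3 ((hδ _).2 hd) hτ
    · exact loc1 hn (fun h => hd ((hδ _).1 h)) (Or.inr hτ)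
  rw [card_sing, Finset.sum_congr rfl fun δ _ => this δ, Finset.sum_ite]
  simp [Finset.filter_ne']

lemma cnt_c {n : F} (hn : ¬ IsSquare n) {D : M F} (h0 : D ≠ 0) (h : dt D = 0) :
    Nat.card {X : M F // X ≠ 0 ∧ dt X = 0 ∧ pr n D 0 X} = Nat.card F ^ 2 - 2 := by
  obtain ⟨δ₀, hδ⟩ := Ed_unique h0 h
  have : ∀ δ, Nat.card {u : F × F // u ≠ 0 ∧ pr n D 0 (Xp δ u)} =
      if δ = δ₀ then Nat.card F ^ 2 - 2 else 0 := by
    intro δ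
    split_ifs with hd
    · exact loc4 ((hδ _).2 hd) h0
    · exact loc2 hn (fun h => hd ((hδ _).1 h)) h
  rw [card_sing, Finset.sum_congr rfl fun δ _ => this δ]
  simp


lemma card_split (p : Vt F → Prop) : Nat.card {z : Vt F // p z} =
    Nat.card {z : Unit // p (.inl z)} + (Nat.card {x : Option F × (F × F) // p (.inr (.inl x))} +
      Nat.card {y : M F × F // p (.inr (.inr y))}) := by
  rw [Nat.card_congr (Equiv.subtypeSum (p := p)), Nat.card_sum]
  congr 1
  rw [Nat.card_congr (Equiv.subtypeSum (p := fun z => p (.inr z))), Nat.card_sum]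

lemma card_fst {A B : Type} (a : A) (p : A × B → Prop) :
    Nat.card {x : A × B // x.1 = a ∧ p x} = Nat.card {b : B // p (a, b)} := by
  refine Nat.card_congr ⟨fun x => ⟨x.1.2, ?_⟩, fun b => ⟨(a, b.1), rfl, b.2⟩, ?_, ?_⟩
  · obtain ⟨⟨x, y⟩, rfl, h⟩ := x; exact h
  · rintro ⟨⟨x, y⟩, rfl, h⟩; rfl
  · rintro ⟨x, h⟩; rfl

lemma card_graph {A B : Type} (f : A → B) (p : A → Prop) :
    Nat.card {x : A × B // p x.1 ∧ x.2 = f x.1} = Nat.card {a : A // p a} := by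
  refine Nat.card_congr ⟨fun x => ⟨x.1.1, x.2.1⟩, fun b => ⟨(b.1, f b.1), b.2, rfl⟩, ?_, ?_⟩
  · rintro ⟨⟨x, y⟩, h, h'⟩
    simp only at h'
    subst h'
    rfl
  · rintro ⟨x, h⟩; rfl

lemma card_free {A B : Type} (p : A → Prop) :
    Nat.card {x : A × B // p x.1} = Nat.card {a : A // p a} * Nat.card B := by
  rw [← Nat.card_prod]
  refine Nat.card_congr ⟨fun x => (⟨x.1.1, x.2⟩, x.1.2), fun b => ⟨(b.1.1, b.2), b.1.2⟩, ?_, ?_⟩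
  · rintro ⟨⟨x, y⟩, h⟩; rfl
  · rintro ⟨⟨x, h⟩, y⟩; rfl

def Zp : Option F → F × F → F × F → M F
  | none, f, u => ((f.1, u.1), (f.2, u.2))
  | some l, f, u => ((u.1, l * u.1 + f.1), (u.2, l * u.2 + f.2))

lemma card_Zp (δ : Option F) (f : F × F) (p : M F → Prop) :
    Nat.card {X : M F // ph δ X = f ∧ p X} = Nat.card {u : F × F // p (Zp δ f u)} := by
  symm
  have hz : ∀ u, ph δ (Zp δ f u) = f := by intro u; cases δ <;> simp [ph, Zp]
  refine Nat.card_congr (Equiv.ofBijective (fun u => ⟨Zp δ f u.1, hz _, u.2⟩) ⟨?_, ?_⟩)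
  · rintro ⟨u, hu⟩ ⟨v, hv⟩ h
    simp only [Subtype.mk.injEq] at h ⊢
    cases δ <;> simp [Zp, Prod.ext_iff] at h ⊢ <;> grind
  · rintro ⟨X, h, hp⟩
    have : ∃ u, X = Zp δ f u := by
      cases δ with
      | none => exact ⟨(X.1.2, X.2.2), by subst h; simp [Zp, ph]⟩
      | some l => exact ⟨(X.1.1, X.2.1), by subst h; simp [Zp, ph]⟩
    obtain ⟨u, rfl⟩ := this
    exact ⟨⟨u, hp⟩, rfl⟩

lemma card_ph (δ : Option F) (f : F × F) : Nat.card {X : M F // ph δ X = f} = Nat.card F ^ 2 := by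
  have := card_Zp δ f (fun _ => True)
  simp only [and_true] at this
  rw [this, Nat.card_congr (Equiv.subtypeUnivEquiv fun _ => trivial), Nat.card_prod, sq]

lemma ph_ph {δ δ' : Option F} (h : δ ≠ δ') {X : M F} (h1 : ph δ X = 0) (h2 : ph δ' X = 0) :
    X = 0 := by
  obtain ⟨⟨a, b⟩, ⟨c, d⟩⟩ := X
  cases δ <;> cases δ' <;> simp [ph] at h h1 h2 ⊢ <;> grind

lemma card_ph2 {δ δ' : Option F} (h : δ ≠ δ') (e e' : F × F) :
    Nat.card {X : M F // ph δ X = e ∧ ph δ' X = e'} = 1 := by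
  have hb : Function.Bijective (fun X : M F => ((ph δ X, ph δ' X) : (F × F) × (F × F))) := by
    rw [← Finite.injective_iff_bijective]
    intro X Y hXY
    simp only [Prod.mk.injEq] at hXY
    rw [← sub_eq_zero]
    apply ph_ph h
    · rw [ph_sub, hXY.1, sub_self]
    · rw [ph_sub, hXY.2, sub_self]
  obtain ⟨X, hX⟩ := hb.2 (e, e')
  apply card_one X
  intro Y
  simp only [Prod.mk.injEq] at hX
  constructor
  · intro hY
    apply hb.1
    simp [hX, hY]
  · rintro rfl; exact hX

lemma card_line {f : F × F} (hf : f ≠ 0) :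
    Nat.card {u : F × F // u.1 * f.2 - u.2 * f.1 = 0} = Nat.card F := by
  symm
  refine Nat.card_congr (Equiv.ofBijective
    (fun s => ⟨(s * f.1, s * f.2), by ring⟩) ⟨?_, ?_⟩)
  · intro s t h
    obtain ⟨f1, f2⟩ := f
    simp at h hf; grind
  · rintro ⟨⟨a, b⟩, h⟩
    obtain ⟨f1, f2⟩ := f
    simp only [ne_eq, Prod.mk_eq_zero, Subtype.mk.injEq, Prod.mk.injEq] at h hf ⊢
    by_cases h1 : f1 = 0
    · refine ⟨b / f2, ?_⟩; grind
    · refine ⟨a / f1, ?_⟩; grind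

lemma cnt_d (δ : Option F) : Nat.card {X : M F // ph δ X = 0 ∧ X ≠ 0 ∧ dt X = 0} =
    Nat.card F ^ 2 - 1 := by
  rw [card_Zp, sq, ← Nat.card_prod, ← card_ne (0 : F × F)]
  refine Nat.card_congr (Equiv.subtypeEquivRight fun u => ?_)
  cases δ <;> simp [Zp, dt, Prod.ext_iff] <;> grind

lemma cnt_e (δ : Option F) {f : F × F} (hf : f ≠ 0) :
    Nat.card {X : M F // ph δ X = f ∧ X ≠ 0 ∧ dt X = 0} = Nat.card F := by
  rw [card_Zp, ← card_line hf]
  refine Nat.card_congr (Equiv.subtypeEquivRight fun u => ?_)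
  obtain ⟨f1, f2⟩ := f
  simp at hf
  cases δ <;> simp [Zp, dt, Prod.ext_iff] <;> grind

/-- points adjacent to `(P,t)` with a property of the first coordinate -/
lemma card_nb (n : F) (P : M F) (t : F) (p : M F → Prop) :
    Nat.card {z : M F × F // p z.1 ∧ (z.1 - P ≠ 0 ∧ dt (z.1 - P) = 0 ∧ t - z.2 = om n P z.1)} =
    Nat.card {X : M F // p (P + X) ∧ X ≠ 0 ∧ dt X = 0} := by
  rw [← Nat.card_congr (Equiv.subtypeEquiv (p := fun Z : M F => p Z ∧ Z - P ≠ 0 ∧ dt (Z - P) = 0)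
    (Equiv.subRight P) (by intro a; simp)),
    ← card_graph (fun Z => t - om n P Z)]
  refine Nat.card_congr (Equiv.subtypeEquivRight fun u => ?_)
  have : t - u.2 = om n P u.1 ↔ u.2 = t - om n P u.1 := by grind
  rw [this]; tauto

lemma card_nb2 (n : F) (P R : M F) (t s : F) :
    Nat.card {z : M F × F // (z.1 - P ≠ 0 ∧ dt (z.1 - P) = 0 ∧ t - z.2 = om n P z.1) ∧
      (z.1 - R ≠ 0 ∧ dt (z.1 - R) = 0 ∧ s - z.2 = om n R z.1)} =
    Nat.card {X : M F // X ≠ 0 ∧ dt X = 0 ∧ pr n (R - P) (s - t + om n P R) X} := by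
  have h1 := card_nb n P t (fun Z => pr n (R - P) (s - t + om n P R) (Z - P))
  simp only [add_sub_cancel_left] at h1
  trans Nat.card {X : M F // pr n (R - P) (s - t + om n P R) X ∧ X ≠ 0 ∧ dt X = 0}
  · rw [← h1]
    refine Nat.card_congr (Equiv.subtypeEquivRight fun z => ?_)
    rw [and_comm]
    apply and_congr_left
    rintro ⟨-, -, h⟩
    rw [pr, sub_sub_sub_cancel_right, sub_ne_zero, ne_eq, ne_eq, sub_left_inj]
    refine and_congr_right fun _ => and_congr_right fun _ => ?_
    simp only [om, Prod.fst_sub, Prod.snd_sub] at h ⊢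
    constructor <;> intro h' <;> linear_combination h - h'
  · refine Nat.card_congr (Equiv.subtypeEquivRight fun z => ?_)
    tauto

lemma card_phcols (D : M F) : (D = 0 → Nat.card {δ : Option F // ph δ D = 0} = Nat.card F + 1) ∧
    (D ≠ 0 → dt D = 0 → Nat.card {δ : Option F // ph δ D = 0} = 1) ∧
    (dt D ≠ 0 → Nat.card {δ : Option F // ph δ D = 0} = 0) := by
  refine ⟨?_, ?_, ?_⟩
  · rintro rfl
    have : ∀ δ : Option F, ph δ 0 = 0 := by intro δ; cases δ <;> simp [ph]
    rw [Nat.card_congr (Equiv.subtypeUnivEquiv this)]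
    simp
  · intro h0 h
    obtain ⟨δ, hδ⟩ := ph_unique h0 h
    exact card_one δ hδ
  · intro h
    exact card_zero (ph_ne h)

lemma card_cols2 (P R : M F) :
    Nat.card {x : Option F × (F × F) // ph x.1 P = x.2 ∧ ph x.1 R = x.2} =
    Nat.card {δ : Option F // ph δ (R - P) = 0} := by
  rw [← card_graph (fun δ => ph δ P)]
  refine Nat.card_congr (Equiv.subtypeEquivRight fun u => ?_)
  rw [ph_sub, sub_eq_zero]; grind

noncomputable def cn (n : F) (x y : Vt F) : ℕ := Nat.card {z : Vt F // adj n x z ∧ adj n y z}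

lemma cn_comm (n : F) (x y : Vt F) : cn n x y = cn n y x :=
  Nat.card_congr (Equiv.subtypeEquivRight fun _ => and_comm)

lemma q_two : 2 ≤ Nat.card F := by
  rw [Nat.card_eq_fintype_card]; exact Fintype.one_lt_card

lemma degree (n : F) (x : Vt F) : Nat.card {z : Vt F // adj n x z} =
    Nat.card F ^ 2 * (Nat.card F + 1) := by
  have h2 : 1 ≤ Nat.card F ^ 2 := by have := q_two (F := F); nlinarith
  obtain ⟨m, hm⟩ := Nat.exists_eq_add_of_le h2
  rw [card_split]
  rcases x with x | x | x
  · simp [adj]; ring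
  · obtain ⟨δ, e⟩ := x
    simp only [adj]
    have := card_fst δ (fun x => e ≠ x.2)
    simp only [eq_comm (b := δ)] at this
    rw [this, card_free (fun X => ph δ X = e), card_ph]
    simp only [ne_comm (a := e)]
    rw [card_ne, Nat.card_prod]
    simp only [Nat.card_unique, ← sq, Nat.card_congr (Equiv.subtypeUnivEquiv fun _ : Unit => trivial)]
    rw [hm, Nat.add_sub_cancel_left]; ring
  · obtain ⟨P, t⟩ := x
    simp only [adj]
    have h1 := card_nb n P t (fun _ => True)
    simp only [true_and] at h1
    have h3 := card_graph (fun δ => ph δ P) (fun _ => True)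
    simp only [true_and, eq_comm (b := ph _ P)] at h3
    rw [h1, card_sing0, h3]
    rw [card_zero (fun _ => id), Nat.card_congr (Equiv.subtypeUnivEquiv fun _ => trivial), hm,
      Nat.add_sub_cancel_left]
    simp only [Finite.card_option]; ring

def good (n : F) (x y : Vt F) : Prop :=
  (adj n x y → cn n x y = Nat.card F ^ 2 - 1) ∧ (¬ adj n x y → cn n x y = Nat.card F + 1)

lemma good_symm {n : F} {x y : Vt F} (h : good n x y) : good n y x := by
  have : adj n y x ↔ adj n x y := ⟨fun h => (gr n).adj_symm h, fun h => (gr n).adj_symm h⟩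
  unfold good
  rw [cn_comm, this]
  exact h

lemma card_unit_true : Nat.card {x : Unit // True} = 1 := by simp

lemma good_ic (n : F) (i : Unit) (x : Option F × (F × F)) : good n (.inl i) (.inr (.inl x)) := by
  refine ⟨fun _ => ?_, fun h => (h trivial).elim⟩
  obtain ⟨δ, e⟩ := x
  rw [cn, card_split]
  simp only [adj, false_and, true_and]
  have := card_fst δ (fun x => e ≠ x.2)
  simp only [eq_comm (b := δ)] at this
  rw [this, card_zero fun _ => id, card_zero fun _ => id]
  simp only [ne_comm (a := e)]
  rw [card_ne, Nat.card_prod, sq]; simp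

lemma good_ip (n : F) (i : Unit) (x : M F × F) : good n (.inl i) (.inr (.inr x)) := by
  refine ⟨fun h => h.elim, fun _ => ?_⟩
  obtain ⟨P, t⟩ := x
  rw [cn, card_split]
  simp only [adj, false_and, true_and]
  have h3 := card_graph (fun δ => ph δ P) (fun _ => True)
  simp only [true_and, eq_comm (b := ph _ P)] at h3
  rw [h3, card_zero fun _ => id, card_zero fun _ => id,
    Nat.card_congr (Equiv.subtypeUnivEquiv fun _ => trivial)]
  simp

lemma good_cc (n : F) (x y : Option F × (F × F)) (hxy : x ≠ y) :
    good n (.inr (.inl x)) (.inr (.inl y)) := by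
  obtain ⟨δ, e⟩ := x
  obtain ⟨δ', e'⟩ := y
  have hq := q_two (F := F)
  have h2 : 2 ≤ Nat.card F ^ 2 := by nlinarith
  by_cases hd : δ = δ'
  · subst hd
    have he : e ≠ e' := by rintro rfl; exact hxy rfl
    refine ⟨fun _ => ?_, fun h => (h ⟨rfl, he⟩).elim⟩
    rw [cn, card_split]
    simp only [adj, true_and]
    have h1 := card_fst δ (fun x => x.2 ≠ e ∧ x.2 ≠ e')
    have h3 : ∀ x : Option F × (F × F), ((δ = x.1 ∧ e ≠ x.2) ∧ (δ = x.1 ∧ e' ≠ x.2)) ↔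
      (x.1 = δ ∧ (x.2 ≠ e ∧ x.2 ≠ e')) := by intro x; grind
    simp only [h3]
    rw [h1, card_ne2 he, Nat.card_prod, ← sq, card_zero (p := fun z : M F × F => _), 
      card_unit_true]
    · omega
    · rintro z ⟨h, h'⟩; exact he (h.symm.trans h')
  · refine ⟨fun h => (hd h.1).elim, fun _ => ?_⟩
    rw [cn, card_split]
    simp only [adj, true_and]
    rw [card_zero (p := fun z : Option F × (F × F) => _),
      card_free (fun X => ph δ X = e ∧ ph δ' X = e'), card_ph2 hd, card_unit_true]
    · omega
    · rintro z ⟨h, h'⟩; exact hd (h.1.trans h'.1.symm)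

lemma good_cp (n : F) (x : Option F × (F × F)) (y : M F × F) :
    good n (.inr (.inl x)) (.inr (.inr y)) := by
  obtain ⟨δ, e⟩ := x
  obtain ⟨P, t⟩ := y
  have h1 := card_nb n P t (fun Z => ph δ Z = e)
  have h2 : ∀ X, ph δ (P + X) = e ↔ ph δ X = e - ph δ P := by
    intro X; rw [ph_add, eq_sub_iff_add_eq, add_comm]
  simp only [h2] at h1
  constructor
  · intro h
    simp only [adj] at h
    rw [cn, card_split]
    simp only [adj, and_false]
    rw [h1, h, sub_self, cnt_d, card_zero fun _ => id, card_zero (p := fun z : Option F × (F × F) => _)]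
    · omega
    · rintro ⟨a, b⟩ ⟨⟨h1, h2⟩, h3⟩
      simp only at h1 h2 h3
      subst h1; exact h2 (h.symm.trans h3)
  · intro h
    simp only [adj] at h
    rw [cn, card_split]
    simp only [adj, and_false]
    rw [h1, cnt_e _ (sub_ne_zero.2 (Ne.symm h)), card_zero fun _ => id, card_one (δ, ph δ P)]
    · omega
    · rintro ⟨a, b⟩
      simp only [Prod.mk.injEq]
      constructor
      · rintro ⟨⟨rfl, h2⟩, h3⟩; exact ⟨rfl, h3.symm⟩
      · rintro ⟨rfl, rfl⟩; exact ⟨⟨rfl, Ne.symm h⟩, rfl⟩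

lemma good_pp {n : F} (hn : ¬ IsSquare n) (x y : M F × F) (hxy : x ≠ y) :
    good n (.inr (.inr x)) (.inr (.inr y)) := by
  obtain ⟨P, t⟩ := x
  obtain ⟨R, s⟩ := y
  have hq := q_two (F := F)
  have h2 : 2 ≤ Nat.card F ^ 2 := by nlinarith
  obtain ⟨c1, c2, c3⟩ := card_phcols (R - P)
  have key : cn n (.inr (.inr (P, t))) (.inr (.inr (R, s))) =
      Nat.card {δ : Option F // ph δ (R - P) = 0} +
      Nat.card {X : M F // X ≠ 0 ∧ dt X = 0 ∧ pr n (R - P) (s - t + om n P R) X} := by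
    rw [cn, card_split]
    simp only [adj, and_false]
    rw [card_nb2, card_cols2, card_zero fun _ => id, zero_add]
  rw [good, key]
  simp only [adj]
  by_cases hd : dt (R - P) = 0
  · by_cases h0 : R - P = 0
    · rw [c1 h0, card_zero (p := fun X : M F => _)]
      · simp [h0]
      · rintro X ⟨-, -, -, -, h⟩
        have := sub_eq_zero.1 h0
        subst this
        apply hxy
        simp only [sub_self, om] at h
        have : t = s := by
          simp at h; linear_combination h
        rw [this]
    · rw [c2 h0 hd]
      by_cases hτ : s - t + om n P R = 0
      · have : t - s = om n P R := by linear_combination -hτ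
        rw [hτ, cnt_c hn h0 hd]
        refine ⟨fun _ => by omega, fun h => (h ⟨h0, hd, this⟩).elim⟩
      · have : t - s ≠ om n P R := by intro h; apply hτ; linear_combination -h
        rw [cnt_b hn h0 hd hτ]
        refine ⟨fun h => (this h.2.2).elim, fun _ => by omega⟩
  · rw [c3 hd, cnt_a hn _ hd]
    exact ⟨fun h => (hd h.2.1).elim, fun _ => by omega⟩

lemma good_all {n : F} (hn : ¬ IsSquare n) (x y : Vt F) (hxy : x ≠ y) : good n x y := by
  rcases x with x | x | x <;> rcases y with y | y | y
  · exact (hxy rfl).elim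
  · exact good_ic n x y
  · exact good_ip n x y
  · exact good_symm (good_ic n y x)
  · exact good_cc n x y (fun h => hxy (by rw [h]))
  · exact good_cp n x y
  · exact good_symm (good_ip n y x)
  · exact good_symm (good_cp n y x)
  · exact good_pp hn x y (fun h => hxy (by rw [h]))

lemma card_V : Nat.card (Vt F) = (Nat.card F ^ 2 + 1) * (Nat.card F ^ 3 + 1) := by
  simp only [Nat.card_sum, Nat.card_prod, Nat.card_unique, Finite.card_option]
  ring

/-- in a collinearity graph, common neighbours of adjacent points are adjacent -/
lemma geom {s t : ℕ} (Q : GenQuadrangle s t) {x y z w : Q.P} (hxy : Q.collinearityGraph.Adj x y)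
    (hxz : Q.collinearityGraph.Adj x z) (hyz : Q.collinearityGraph.Adj y z)
    (hxw : Q.collinearityGraph.Adj x w) (hyw : Q.collinearityGraph.Adj y w) (hzw : z ≠ w) :
    Q.collinearityGraph.Adj z w := by
  have hA : ∀ a b, Q.collinearityGraph.Adj a b ↔ a ≠ b ∧ ∃ l, Q.Incid a l ∧ Q.Incid b l := by
    intro a b
    rw [GenQuadrangle.collinearityGraph, SimpleGraph.fromRel_adj]
    refine and_congr_right fun _ => ⟨?_, Or.inl⟩
    rintro (h | ⟨l, h1, h2⟩)
    · exact h
    · exact ⟨l, h2, h1⟩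
  rw [hA] at hxy hxz hyz hxw hyw ⊢
  obtain ⟨hne, l, hx, hy⟩ := hxy
  have on : ∀ z, (x ≠ z ∧ ∃ l, Q.Incid x l ∧ Q.Incid z l) →
      (y ≠ z ∧ ∃ l, Q.Incid y l ∧ Q.Incid z l) → Q.Incid z l := by
    rintro z ⟨-, m, h1, h2⟩ ⟨-, m', h3, h4⟩
    by_contra hz
    have := (GenQuadrangle.gq_axiom Q z l hz).unique (y₁ := (x, m)) (y₂ := (y, m')) ⟨h2, h1, hx⟩ ⟨h4, h3, hy⟩
    exact hne (Prod.ext_iff.1 this).1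
  exact ⟨hzw, l, on z hxz hyz, on w hxw hyw⟩

lemma nongeom {n : F} (hn : ¬ IsSquare n) {s t : ℕ} (Q : GenQuadrangle s t)
    (φ : gr n ≃g Q.collinearityGraph) : False := by
  have hn0 : n ≠ 0 := by rintro rfl; exact hn (IsSquare.zero)
  let x : Vt F := .inr (.inl (none, (0, 0)))
  let y : Vt F := .inr (.inr (0, 0))
  let z : Vt F := .inr (.inr (((0, 1), (0, 0)), 0))
  let w : Vt F := .inr (.inr (((0, 0), (0, 1)), 0))
  have h := geom Q (x := φ x) (y := φ y) (z := φ z) (w := φ w)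
  simp only [SimpleGraph.Iso.map_adj_iff, ne_eq, EmbeddingLike.apply_eq_iff_eq] at h
  have := h (by simp [gr, x, y, adj, ph]) (by simp [gr, x, z, adj, ph])
    (by simp [gr, y, z, adj, dt, om]) (by simp [gr, x, w, adj, ph])
    (by simp [gr, y, w, adj, dt, om]) (by simp [z, w])
  simp [gr, z, w, adj, om, hn0] at this

end
end HGQ

/-- for every odd prime power `q` there exists a strongly regular graph with
parameters `((q²+1)(q³+1), q²(q+1), q²−1, q+1)` (hence cospectral with the collinearity
graph of the Hermitian generalized quadrangle `H(3,q²)`, a generalized quadrangle of order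
`(q², q)`) that is not isomorphic to the collinearity graph of any generalized quadrangle
of order `(q², q)`. -/
theorem exists_nongeometric_mate_of_hermitian_gq (q p k : ℕ) (hp : p.Prime)
    (hk : 1 ≤ k) (hq : q = p ^ k) (hodd : Odd q) :
    ∃ G : SimpleGraph (Fin ((q ^ 2 + 1) * (q ^ 3 + 1))),
      G.IsSRGWith ((q ^ 2 + 1) * (q ^ 3 + 1)) (q ^ 2 * (q + 1)) (q ^ 2 - 1) (q + 1) ∧
      ∀ Q : GenQuadrangle (q ^ 2) q, ¬ Nonempty (G ≃g Q.collinearityGraph) := by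
  have : Fact p.Prime := ⟨hp⟩
  have hk0 : k ≠ 0 := by omega
  let F := GaloisField p k
  have hF : Nat.card F = q := by rw [hq]; exact GaloisField.card p k hk0
  have : Fintype F := Fintype.ofFinite F
  have hchar : ringChar F ≠ 2 := by
    intro h
    have h2 : p = 2 := by rw [← h]; exact (ringChar.eq F p).symm
    rw [hq, h2] at hodd
    exact (Nat.not_odd_iff_even.2 (Nat.even_pow.2 ⟨even_two, hk0⟩)) hodd
  obtain ⟨n, hn⟩ := FiniteField.exists_nonsquare hchar
  have hV := HGQ.card_V (F := F)
  rw [hF] at hV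
  let e : Fin ((q ^ 2 + 1) * (q ^ 3 + 1)) ≃ HGQ.Vt F :=
    (Fintype.equivFinOfCardEq (by rw [← hV, Nat.card_eq_fintype_card])).symm
  refine ⟨(HGQ.gr n).comap e, ⟨?_, ?_, ?_, ?_⟩, ?_⟩
  · simp
  · intro v
    have hd := HGQ.degree n (e v)
    rw [hF] at hd
    rw [← SimpleGraph.card_neighborSet_eq_degree, ← Nat.card_eq_fintype_card, ← hd]
    exact Nat.card_congr (Equiv.subtypeEquiv e fun a => Iff.rfl)
  · intro v w h
    have hd := (HGQ.good_all hn (e v) (e w) (fun h' => (HGQ.gr n).ne_of_adj h h')).1 h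
    rw [hF] at hd
    rw [← Nat.card_eq_fintype_card, ← hd]
    exact Nat.card_congr (Equiv.subtypeEquiv e fun a => Iff.rfl)
  · intro v w hvw h
    have hd := (HGQ.good_all hn (e v) (e w) (fun h' => hvw (e.injective h'))).2 h
    rw [hF] at hd
    rw [← Nat.card_eq_fintype_card, ← hd]
    exact Nat.card_congr (Equiv.subtypeEquiv e fun a => Iff.rfl)
  · rintro Q ⟨φ⟩
    exact HGQ.nongeom hn Q ((SimpleGraph.Iso.comap e (HGQ.gr n)).symm.trans φ)
end

section
/- Let q ≥ 2, let Γ be a strongly regular graph with parameters (q³+q²+q+1, q²+q, q−1, q+1), and let v be a regular point of Γ (with s = t = q). Define a graph Γ' on the set of vertices distinct from v and not adjacent to v (a set of q³ vertices) by letting distinct x, y be adjacent in Γ' iff either x and y are adjacent in Γ or N(v) ∩ N(x) = N(v) ∩ N(y). Then Γ' is a strongly regular graph with parameters (q³, (q−1)(q+2), q−2, q+2), i.e., with the parameters of the collinearity graph of a generalized quadrangle of order (q−1, q+1). -/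
open scoped Classical

lemma key_count {V : Type} [Fintype V] (q : ℕ) (G : SimpleGraph V)
    (hcard : Fintype.card V = q ^ 3 + q ^ 2 + q + 1)
    (hdeg : ∀ x, (Finset.univ.filter (fun w => G.Adj x w)).card = q ^ 2 + q)
    (hnon : ∀ x y, x ≠ y → ¬ G.Adj x y →
      (Finset.univ.filter (fun w => G.Adj x w ∧ G.Adj y w)).card = q + 1)
    (S T : Finset V) (hS : S.card = q + 1) (hT : T.card = q + 1)
    (hco : ∀ x ∈ S, ∀ y ∈ S, ¬ G.Adj x y)
    (hST : ∀ x ∈ S, ∀ y ∈ T, G.Adj x y) (y : V) (hyS : y ∉ S) (hyT : y ∉ T) :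
    (S.filter (fun s => G.Adj y s)).card = 1 := by
  have hdisj : Disjoint S T := by
    rw [Finset.disjoint_left]
    intro a ha hb
    exact G.loopless.irrefl a (hST a ha a hb)
  let a : V → ℤ := fun y => ∑ s ∈ S, if G.Adj y s then 1 else 0
  have ha : ∀ y, a y = ((S.filter (fun s => G.Adj y s)).card : ℤ) := by
    intro y; simp [a]
  have h1 : ∑ y, a y = (q + 1) * (q ^ 2 + q) := by
    simp only [a]
    rw [Finset.sum_comm]
    have : ∀ s ∈ S, (∑ y, if G.Adj y s then (1:ℤ) else 0) = q ^ 2 + q := by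
      intro s _
      have := hdeg s
      simp only [Finset.sum_boole, G.adj_comm _ s]
      exact_mod_cast this
    rw [Finset.sum_congr rfl this]
    simp [hS]
  have h2 : ∑ y, a y ^ 2 = (q + 1) * (q ^ 2 + q + q * (q + 1)) := by
    have e : ∀ y, a y ^ 2 = ∑ s ∈ S, ∑ s' ∈ S, if G.Adj s y ∧ G.Adj s' y then (1:ℤ) else 0 := by
      intro y
      simp only [a, sq, Finset.sum_mul_sum]
      refine Finset.sum_congr rfl fun s _ => Finset.sum_congr rfl fun s' _ => ?_
      simp only [G.adj_comm y]
      by_cases h : G.Adj s y <;> by_cases h' : G.Adj s' y <;> simp [h, h']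
    simp only [e]
    rw [Finset.sum_comm]
    have : ∀ s ∈ S, (∑ y, ∑ s' ∈ S, if G.Adj s y ∧ G.Adj s' y then (1:ℤ) else 0)
        = q ^ 2 + q + q * (q + 1) := by
      intro s hs
      rw [Finset.sum_comm, ← Finset.add_sum_erase _ _ hs]
      have h3 : ∀ s' ∈ S.erase s, (∑ y, if G.Adj s y ∧ G.Adj s' y then (1:ℤ) else 0) = q + 1 := by
        intro s' hs'
        have := hnon s s' (Finset.ne_of_mem_erase hs').symm
          (hco s hs s' (Finset.mem_of_mem_erase hs'))
        simp only [Finset.sum_boole]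
        exact_mod_cast this
      rw [Finset.sum_congr rfl h3]
      have := hdeg s
      simp only [and_self, Finset.sum_boole, Finset.sum_const, Finset.card_erase_of_mem hs, hS, this]
      simp
    rw [Finset.sum_congr rfl this]
    simp [hS]
  have h3 : ∑ y, (a y - 1) ^ 2 = ((q:ℤ) + 1) * (q ^ 2 + 1) := by
    have : ∀ y, (a y - 1) ^ 2 = a y ^ 2 - 2 * a y + 1 := by intro y; ring
    simp only [this, Finset.sum_add_distrib, Finset.sum_sub_distrib, ← Finset.mul_sum, h1, h2]
    simp [hcard]
    ring
  have h4 : ∑ y ∈ S ∪ T, (a y - 1) ^ 2 = ((q:ℤ) + 1) * (q ^ 2 + 1) := by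
    rw [Finset.sum_union hdisj]
    have e1 : ∀ y ∈ S, (a y - 1) ^ 2 = 1 := by
      intro y hy
      have : a y = 0 := by
        rw [ha, Finset.filter_false_of_mem (fun s hs => hco y hy s hs)]; simp
      simp [this]
    have e2 : ∀ y ∈ T, (a y - 1) ^ 2 = q ^ 2 := by
      intro y hy
      have : a y = q + 1 := by
        rw [ha, Finset.filter_true_of_mem (fun s hs => (hST s hs y hy).symm), hS]; simp
      simp [this]
    rw [Finset.sum_congr rfl e1, Finset.sum_congr rfl e2]
    simp [hS, hT]; ring
  have h5 : ∑ y ∈ (S ∪ T)ᶜ, (a y - 1) ^ 2 = 0 := by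
    have := Finset.sum_add_sum_compl (S ∪ T) (fun y => (a y - 1) ^ 2)
    linarith
  have h6 := (Finset.sum_eq_zero_iff_of_nonneg (fun i _ => sq_nonneg (a i - 1))).1 h5 y
    (by simp [hyS, hyT])
  have h7 : a y = 1 := by
    have := pow_eq_zero_iff (two_ne_zero) |>.1 h6
    linarith
  rw [ha] at h7
  exact_mod_cast h7

lemma subtype_count {V : Type} [Fintype V] (P : V → Prop) (Q : V → Prop)
    (s : Set {x : V | P x}) [Fintype s] [DecidablePred fun w => P w ∧ Q w] (hs : ∀ z, z ∈ s ↔ Q z.1) :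
    Fintype.card s = (Finset.univ.filter (fun w => P w ∧ Q w)).card := by
  rw [← Fintype.card_subtype]
  refine Fintype.card_congr
    ⟨fun z => ⟨z.1.1, z.1.2, (hs _).1 z.2⟩, fun z => ⟨⟨z.1, z.2.1⟩, (hs _).2 z.2.2⟩,
      fun _ => rfl, fun _ => rfl⟩

lemma structure_facts {V : Type} [Fintype V]
    (q : ℕ) (hq : 2 ≤ q) (G : SimpleGraph V)
    (hcard : Fintype.card V = q ^ 3 + q ^ 2 + q + 1)
    (hdeg : ∀ x, (Finset.univ.filter (fun w => G.Adj x w)).card = q ^ 2 + q)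
    (hadj : ∀ x y, G.Adj x y →
      (Finset.univ.filter (fun w => G.Adj x w ∧ G.Adj y w)).card = q - 1)
    (hnon : ∀ x y, x ≠ y → ¬ G.Adj x y →
      (Finset.univ.filter (fun w => G.Adj x w ∧ G.Adj y w)).card = q + 1)
    (v : V) (hreg : IsRegularPoint G q v) (x : V) (hx : x ≠ v) (hvx : ¬ G.Adj v x)
    (T C : Finset V) (hT : T = Finset.univ.filter (fun w => G.Adj v w ∧ G.Adj x w))
    (hC : C = Finset.univ.filter (fun w => (w ≠ v ∧ ¬ G.Adj v w) ∧ 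
      G.neighborSet v ∩ G.neighborSet x = G.neighborSet v ∩ G.neighborSet w)) :
    C.card = q ∧ (∀ y ∈ C, ∀ z ∈ C, ¬ G.Adj y z) ∧
    (∀ y, y ≠ v → ¬ G.Adj v y → y ∉ C → (C.filter (fun s => G.Adj y s)).card = 1 ∧
      (T.filter (fun s => G.Adj y s)).card = 1) := by
  obtain ⟨hc, hco⟩ := hreg.2 x hx hvx
  have hTc : T.card = q + 1 := by rw [hT]; exact hnon v x hx.symm hvx
  have hTm : ∀ w, w ∈ T ↔ G.Adj v w ∧ G.Adj x w := by intro w; simp [hT]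
  have hp : perp G {v, x} = (T : Set V) := by
    ext w
    simp only [perp, Set.mem_ofPred_eq, Set.mem_insert_iff, Set.mem_singleton_iff, forall_eq_or_imp,
      forall_eq, Finset.mem_coe, hTm]
    constructor
    · rintro ⟨rfl | h1, rfl | h2⟩
      · exact absurd rfl hx
      · exact absurd h2 hvx
      · exact absurd h1.symm hvx
      · exact ⟨h1.symm, h2.symm⟩
    · rintro ⟨h1, h2⟩; exact ⟨Or.inr h1.symm, Or.inr h2.symm⟩
  rw [hp] at hc hco
  have hvin : v ∈ perp G (T : Set V) := by
    intro u hu; exact Or.inr ((hTm u).1 hu).1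
  have hST0 : ∀ w ∈ perp G (T : Set V), ∀ u ∈ T, G.Adj w u := by
    intro w hw u hu
    rcases hw u hu with rfl | h
    · exact absurd ((hTm w).1 hu).1 (hco v hvin w hw)
    · exact h
  have hS : ∀ w, w ∈ insert v C ↔ w ∈ perp G (T : Set V) := by
    intro w
    constructor
    · intro h
      rcases Finset.mem_insert.1 h with rfl | h
      · exact hvin
      · intro u hu
        rw [hC] at h
        have h := (Finset.mem_filter.1 h).2.2
        have h2 : u ∈ G.neighborSet v ∩ G.neighborSet x := (hTm u).1 hu
        rw [h] at h2
        exact Or.inr h2.2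
    · intro h
      by_cases hwv : w = v
      · simp [hwv]
      · refine Finset.mem_insert_of_mem ?_
        have hvw := hco v hvin w h
        rw [hC]
        simp only [Finset.mem_filter, Finset.mem_univ, true_and]
        refine ⟨⟨hwv, hvw⟩, ?_⟩
        have hsub : T ⊆ Finset.univ.filter (fun u => G.Adj v u ∧ G.Adj w u) := by
          intro u hu
          simp only [Finset.mem_filter, Finset.mem_univ, true_and]
          exact ⟨((hTm u).1 hu).1, hST0 w h u hu⟩
        have heq := Finset.eq_of_subset_of_card_le hsub
          (by rw [hTc, hnon v w (Ne.symm hwv) hvw])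
        ext u
        have := hTm u
        rw [heq] at this
        simp only [Finset.mem_filter, Finset.mem_univ, true_and] at this
        exact this.symm
  have hSc : (insert v C).card = q + 1 := by
    rw [← hc, ← Set.ncard_coe_finset]
    congr 1
    ext w
    exact hS w
  have hvC : v ∉ C := by simp [hC]
  have hSco : ∀ y ∈ insert v C, ∀ z ∈ insert v C, ¬ G.Adj y z := fun y hy z hz =>
    hco y ((hS y).1 hy) z ((hS z).1 hz)
  have hST : ∀ y ∈ insert v C, ∀ z ∈ T, G.Adj y z := fun y hy z hz =>
    hST0 y ((hS y).1 hy) z hz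
  have hTco : ∀ y ∈ T, ∀ z ∈ T, ¬ G.Adj y z := by
    intro y hy z hz h
    have h1 := hadj y z h
    have h2 : insert v C ⊆ Finset.univ.filter (fun w => G.Adj y w ∧ G.Adj z w) := by
      intro u hu
      simp only [Finset.mem_filter, Finset.mem_univ, true_and]
      exact ⟨(hST u hu y hy).symm, (hST u hu z hz).symm⟩
    have := Finset.card_le_card h2
    omega
  refine ⟨?_, fun y hy z hz => hSco y (Finset.mem_insert_of_mem hy) z (Finset.mem_insert_of_mem hz), ?_⟩
  · rw [Finset.card_insert_of_notMem hvC] at hSc; omega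
  · intro y hyv hvy hyC
    have hyS : y ∉ insert v C := by simp [hyv, hyC]
    have hyT : y ∉ T := by simp [hTm, hvy]
    constructor
    · have := key_count q G hcard hdeg hnon (insert v C) T hSc hTc hSco hST y hyS hyT
      rwa [Finset.filter_insert, if_neg (fun h => hvy h.symm)] at this
    · exact key_count q G hcard hdeg hnon T (insert v C) hTc hSc hTco
        (fun a ha b hb => (hST b hb a ha).symm) y hyT hyS

theorem secondSubconstituent_with_spread_isSRGWith {V : Type} [Fintype V]
    (q : ℕ) (hq : 2 ≤ q) (G : SimpleGraph V)
    (hG : G.IsSRGWith (q ^ 3 + q ^ 2 + q + 1) (q ^ 2 + q) (q - 1) (q + 1))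
    (v : V) (hreg : IsRegularPoint G q v) :
    (SimpleGraph.fromRel
      (fun x y : {x : V | x ≠ v ∧ ¬ G.Adj v x} =>
        G.Adj ↑x ↑y ∨
          G.neighborSet v ∩ G.neighborSet ↑x =
            G.neighborSet v ∩ G.neighborSet ↑y)).IsSRGWith
      (q ^ 3) ((q - 1) * (q + 2)) (q - 2) (q + 2) := by
  have hcard := hG.card
  have hdeg : ∀ x, (Finset.univ.filter (fun w => G.Adj x w)).card = q ^ 2 + q := by
    intro x
    rw [← hG.regular x, ← SimpleGraph.card_neighborFinset_eq_degree]
    congr 1; ext w; simp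
  have hadj : ∀ x y, G.Adj x y →
      (Finset.univ.filter (fun w => G.Adj x w ∧ G.Adj y w)).card = q - 1 := by
    intro x y h
    rw [← hG.of_adj x y h, ← Set.toFinset_card]
    congr 1; ext w; simp [SimpleGraph.mem_commonNeighbors]
  have hnon : ∀ x y, x ≠ y → ¬ G.Adj x y →
      (Finset.univ.filter (fun w => G.Adj x w ∧ G.Adj y w)).card = q + 1 := by
    intro x y hne h
    rw [← hG.of_not_adj hne h, ← Set.toFinset_card]
    congr 1; ext w; simp [SimpleGraph.mem_commonNeighbors]
  set t : V → Set V := fun x => G.neighborSet v ∩ G.neighborSet x with ht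
  set P : V → Prop := fun x => x ≠ v ∧ ¬ G.Adj v x with hP
  let C : V → Finset V := fun x => Finset.univ.filter (fun w => P w ∧ t x = t w)
  let T : V → Finset V := fun x => Finset.univ.filter (fun w => G.Adj v w ∧ G.Adj x w)
  have F : ∀ x, P x → (C x).card = q ∧ (∀ y ∈ C x, ∀ z ∈ C x, ¬ G.Adj y z) ∧
    (∀ y, P y → t x ≠ t y → ((C x).filter (fun s => G.Adj y s)).card = 1 ∧
      ((T x).filter (fun s => G.Adj y s)).card = 1) := by
    intro x hx
    obtain ⟨h1, h2, h3⟩ := structure_facts q hq G hcard hdeg hadj hnon v hreg x hx.1 hx.2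
      (T x) (C x) rfl rfl
    exact ⟨h1, h2, fun y hy hne => h3 y hy.1 hy.2 (by simp [C, hne])⟩
  have hCm : ∀ x w, w ∈ C x ↔ P w ∧ t x = t w := by intro x w; simp [C]
  have hTm : ∀ x w, w ∈ T x ↔ G.Adj v w ∧ G.Adj x w := by intro x w; simp [T]
  have hcl : ∀ x y, P x → P y → t x = t y → ¬ G.Adj x y := by
    intro x y hx hy h
    exact (F x hx).2.1 x (by simp [hCm, hx]) y (by simp [hCm, hy, h])
  -- common neighbours outside v^⊥
  have hPadj : ∀ x z, P x → G.Adj x z → z ≠ v := by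
    rintro x z hx h rfl; exact hx.2 h.symm
  let Q : V → V → Prop := fun x z => x ≠ z ∧ (G.Adj x z ∨ t x = t z)
  have hQ : ∀ x y : {x : V | P x}, (SimpleGraph.fromRel
      (fun x y : {x : V | P x} => G.Adj ↑x ↑y ∨ t ↑x = t ↑y)).Adj x y ↔ Q x.1 y.1 := by
    intro x y
    simp only [SimpleGraph.fromRel_adj, Q, ne_eq, Subtype.ext_iff, G.adj_comm y.1 x.1,
      eq_comm (a := t y.1), or_self]
  refine ⟨?_, ?_, ?_, ?_⟩
  · have := hdeg v
    have h := Finset.card_filter_add_card_filter_not (s := (Finset.univ : Finset V)) (fun w => w = v ∨ G.Adj v w)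
    have e1 : (Finset.univ.filter (fun w => w = v ∨ G.Adj v w)) =
        insert v (Finset.univ.filter (fun w => G.Adj v w)) := by
      ext w; simp
    rw [e1, Finset.card_insert_of_notMem (by simp), this, Finset.card_univ, hcard] at h
    have e2 : Fintype.card {x : V | P x} = (Finset.univ.filter (fun w => ¬ (w = v ∨ G.Adj v w))).card := by
      rw [← Set.toFinset_card]; congr 1; ext w; simp [P]
    have : Fintype.card {x : V | P x} = q ^ 3 := by omega
    convert this
  · intro x
    have hx : P x.1 := x.2
    rw [← SimpleGraph.card_neighborSet_eq_degree,
      subtype_count P (Q x.1) _ (fun z => by rw [SimpleGraph.mem_neighborSet]; exact hQ x z)]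
    have e : (Finset.univ.filter (fun w => P w ∧ Q x.1 w)) =
        ((Finset.univ.filter (fun w => G.Adj x.1 w)).filter (fun w => ¬ G.Adj v w)) ∪
          (C x.1).erase x.1 := by
      ext w
      simp only [Finset.mem_filter, Finset.mem_univ, true_and, Finset.mem_union, Finset.mem_erase, hCm, Q]
      have := hPadj x.1 w hx
      have := G.ne_of_adj (a := x.1) (b := w)
      simp only [hP] at *
      tauto
    have hd : Disjoint ((Finset.univ.filter (fun w => G.Adj x.1 w)).filter (fun w => ¬ G.Adj v w))
          ((C x.1).erase x.1) := by
      rw [Finset.disjoint_left]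
      intro w h1 h2
      simp only [Finset.mem_filter, Finset.mem_univ, true_and, Finset.mem_erase, hCm] at h1 h2
      exact hcl _ _ hx h2.2.1 h2.2.2 h1.1
    rw [e, Finset.card_union_of_disjoint hd, Finset.card_erase_of_mem (by simp [hCm, hx]), (F _ hx).1]
    have h := Finset.card_filter_add_card_filter_not
      (s := (Finset.univ.filter (fun w => G.Adj x.1 w))) (fun w => G.Adj v w)
    have h1 := hnon x.1 v hx.1 (fun h => hx.2 h.symm)
    rw [Finset.filter_filter, h1, hdeg] at h
    obtain ⟨r, rfl⟩ : ∃ r, q = r + 1 := ⟨q - 1, by omega⟩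
    simp only [Nat.add_sub_cancel]
    nlinarith
  · intro x y hxy
    have hx : P x.1 := x.2
    have hy : P y.1 := y.2
    rw [hQ] at hxy
    rw [subtype_count P (fun w => Q x.1 w ∧ Q y.1 w) _
      (fun z => by rw [SimpleGraph.mem_commonNeighbors, hQ, hQ])]
    obtain ⟨hne, hxy | hxy⟩ := hxy
    · have hT : t x.1 ≠ t y.1 := fun h => hcl _ _ hx hy h hxy
      have hCx := ((F _ hx).2.2 _ hy hT).1
      have hCy := ((F _ hy).2.2 _ hx hT.symm).1
      have hTx := ((F _ hx).2.2 _ hy hT).2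
      rw [Finset.card_eq_one] at hCx hCy
      have ux : ∀ z, P z → t x.1 = t z → G.Adj y.1 z → z = x.1 := by
        obtain ⟨a, ha⟩ := hCx
        have h : ∀ z, z ∈ (C x.1).filter (fun s => G.Adj y.1 s) → z = a := by
          intro z hz; rw [ha] at hz; simpa using hz
        intro z h1 h2 h3
        rw [h z (by simp [hCm, h1, h2, h3]), h x.1 (by simp [hCm, hx, hxy.symm])]
      have uy : ∀ z, P z → t y.1 = t z → G.Adj x.1 z → z = y.1 := by
        obtain ⟨a, ha⟩ := hCy
        have h : ∀ z, z ∈ (C y.1).filter (fun s => G.Adj x.1 s) → z = a := by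
          intro z hz; rw [ha] at hz; simpa using hz
        intro z h1 h2 h3
        rw [h z (by simp [hCm, h1, h2, h3]), h y.1 (by simp [hCm, hy, hxy])]
      have e : (Finset.univ.filter (fun w => P w ∧ Q x.1 w ∧ Q y.1 w)) =
        ((Finset.univ.filter (fun w => G.Adj x.1 w ∧ G.Adj y.1 w)).filter (fun w => ¬ G.Adj v w)) := by
        ext w
        simp only [Finset.mem_filter, Finset.mem_univ, true_and, Q]
        constructor
        · rintro ⟨hw, ⟨h1, h2 | h2⟩, h3, h4 | h4⟩
          · exact ⟨⟨h2, h4⟩, hw.2⟩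
          · exact absurd (uy w hw h4 h2).symm h3
          · exact absurd (ux w hw h2 h4).symm h1
          · exact absurd (h2.trans h4.symm) hT
        · rintro ⟨⟨h1, h2⟩, h3⟩
          exact ⟨⟨hPadj _ _ hx h1, h3⟩, ⟨h1.ne, Or.inl h1⟩, h2.ne, Or.inl h2⟩
      have h := Finset.card_filter_add_card_filter_not
        (s := (Finset.univ.filter (fun w => G.Adj x.1 w ∧ G.Adj y.1 w))) (fun w => G.Adj v w)
      have e2 : (Finset.univ.filter (fun w => G.Adj x.1 w ∧ G.Adj y.1 w)).filter (fun w => G.Adj v w)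
          = (T x.1).filter (fun s => G.Adj y.1 s) := by
        ext w
        simp only [Finset.mem_filter, Finset.mem_univ, true_and, hTm]
        tauto
      rw [e2, hTx, ← e, hadj _ _ hxy] at h
      omega
    · have e : (Finset.univ.filter (fun w => P w ∧ Q x.1 w ∧ Q y.1 w)) =
        ((C x.1).erase x.1).erase y.1 := by
        ext w
        simp only [Finset.mem_filter, Finset.mem_univ, true_and, Finset.mem_erase, hCm, Q]
        constructor
        · rintro ⟨hw, ⟨h1, h2 | h2⟩, h3, h4 | h4⟩
          · exfalso
            have hvw : G.Adj v w := by
              have hs : T x.1 ⊆ Finset.univ.filter (fun w => G.Adj x.1 w ∧ G.Adj y.1 w) := by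
                intro u hu
                have hu := (hTm _ _).1 hu
                have hu2 : u ∈ t x.1 := hu
                rw [hxy] at hu2
                simp only [Finset.mem_filter, Finset.mem_univ, true_and]
                exact ⟨hu.2, hu2.2⟩
              have := Finset.eq_of_subset_of_card_le hs (by
                rw [hnon _ _ hne (hcl _ _ hx hy hxy)]
                exact (hnon v x.1 hx.1.symm hx.2).ge)
              have hw2 : w ∈ T x.1 := by rw [this]; simp [h2, h4]
              exact ((hTm _ _).1 hw2).1
            exact hw.2 hvw
          · exact absurd h2 (hcl _ _ hx hw (hxy.trans h4))
          · exact absurd h4 (hcl _ _ hy hw (hxy.symm.trans h2))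
          · exact ⟨Ne.symm h3, Ne.symm h1, hw, h2⟩
        · rintro ⟨h1, h2, h3, h4⟩
          exact ⟨h3, ⟨Ne.symm h2, Or.inr h4⟩, Ne.symm h1, Or.inr (hxy.symm.trans h4)⟩
      rw [e, Finset.card_erase_of_mem (by simp [hCm, hy, hxy, Ne.symm hne]),
        Finset.card_erase_of_mem (by simp [hCm, hx]), (F _ hx).1]
      omega
  · intro x y hne' hxy
    have hx : P x.1 := x.2
    have hy : P y.1 := y.2
    have hne : x.1 ≠ y.1 := fun h => hne' (Subtype.ext h)
    rw [hQ] at hxy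
    rw [subtype_count P (fun w => Q x.1 w ∧ Q y.1 w) _
      (fun z => by rw [SimpleGraph.mem_commonNeighbors, hQ, hQ])]
    have hna : ¬ G.Adj x.1 y.1 := fun h => hxy ⟨hne, Or.inl h⟩
    have hT : t x.1 ≠ t y.1 := fun h => hxy ⟨hne, Or.inr h⟩
    have hCx := ((F _ hx).2.2 _ hy hT).1
    have hCy := ((F _ hy).2.2 _ hx hT.symm).1
    have hTx := ((F _ hx).2.2 _ hy hT).2
    have e : (Finset.univ.filter (fun w => P w ∧ Q x.1 w ∧ Q y.1 w)) =
        ((Finset.univ.filter (fun w => G.Adj x.1 w ∧ G.Adj y.1 w)).filter (fun w => ¬ G.Adj v w)) ∪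
        ((C x.1).filter (fun s => G.Adj y.1 s) ∪ (C y.1).filter (fun s => G.Adj x.1 s)) := by
      ext w
      simp only [Finset.mem_filter, Finset.mem_univ, true_and, Finset.mem_union, hCm, Q]
      constructor
      · rintro ⟨hw, ⟨h1, h2 | h2⟩, h3, h4 | h4⟩
        · exact Or.inl ⟨⟨h2, h4⟩, hw.2⟩
        · exact Or.inr (Or.inr ⟨⟨hw, h4⟩, h2⟩)
        · exact Or.inr (Or.inl ⟨⟨hw, h2⟩, h4⟩)
        · exact absurd (h2.trans h4.symm) hT
      · rintro (⟨⟨h1, h2⟩, h3⟩ | ⟨⟨hw, h1⟩, h2⟩ | ⟨⟨hw, h1⟩, h2⟩)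
        · exact ⟨⟨hPadj _ _ hx h1, h3⟩, ⟨h1.ne, Or.inl h1⟩, h2.ne, Or.inl h2⟩
        · refine ⟨hw, ⟨?_, Or.inr h1⟩, h2.ne, Or.inl h2⟩
          intro h; rw [← h] at h2; exact hna h2.symm
        · refine ⟨hw, ⟨h2.ne, Or.inl h2⟩, ?_, Or.inr h1⟩
          intro h; rw [← h] at h2; exact hna h2
    have h := Finset.card_filter_add_card_filter_not
      (s := (Finset.univ.filter (fun w => G.Adj x.1 w ∧ G.Adj y.1 w))) (fun w => G.Adj v w)
    have e2 : (Finset.univ.filter (fun w => G.Adj x.1 w ∧ G.Adj y.1 w)).filter (fun w => G.Adj v w)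
        = (T x.1).filter (fun s => G.Adj y.1 s) := by
      ext w
      simp only [Finset.mem_filter, Finset.mem_univ, true_and, hTm]
      tauto
    rw [e2, hTx, hnon _ _ hne hna] at h
    rw [e, Finset.card_union_of_disjoint, Finset.card_union_of_disjoint, hCx, hCy]
    · omega
    · rw [Finset.disjoint_left]
      intro w h1 h2
      simp only [Finset.mem_filter, hCm] at h1 h2
      exact hT (h1.1.2.trans h2.1.2.symm)
    · rw [Finset.disjoint_left]
      intro w h1 h2
      simp only [Finset.mem_filter, Finset.mem_univ, true_and, Finset.mem_union, hCm] at h1 h2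
      rcases h2 with h2 | h2
      · exact hcl _ _ hx h2.1.1 h2.1.2 h1.1.1
      · exact hcl _ _ hy h2.1.1 h2.1.2 h1.1.2
end
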